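/- arXiv:2310.02243 — 8 statements merged into one kernel-verified Lean document; each statement's English description precedes it below -/
import Mathlib

section
/- Let ε, η ∈ (0,1), κ ≥ 1, and let k, ℓ be positive integers with k ≥ 5/η and ℓ ≥ 100(κ + log(k/ε)). Then both p_{k,ℓ} and q_{k,ℓ} are (κ, η, ε)-flat exponential approximations; that is, for f ∈ {p_{k,ℓ}, q_{k,ℓ}} one has |f(x) − e^x| ≤ ε for all x ∈ [−κ, κ] and |f(x)| ≤ max(1, e^x)·e^{η|x|} for all x ∈ ℝ. -/
open scoped BigOperators

/-- `taylorExp ℓ x = ∑_{k=0}^{ℓ} x^k/k!`, the degree-`ℓ` truncation of the Taylor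
series of `e^x`. -/
noncomputable def taylorExp (ℓ : ℕ) (x : ℝ) : ℝ :=
  ∑ k ∈ Finset.range (ℓ + 1), x ^ k / (Nat.factorial k : ℝ)

/-- `pkl k ℓ x = ∏_{j=1}^{k} s_{2^j ℓ}(x/k)`. -/
noncomputable def pkl (k ℓ : ℕ) (x : ℝ) : ℝ :=
  ∏ j ∈ Finset.Icc 1 k, taylorExp (2 ^ j * ℓ) (x / (k : ℝ))

/-- `qkl k ℓ x = 1 + ∫_0^x pkl k ℓ y dy`. -/
noncomputable def qkl (k ℓ : ℕ) (x : ℝ) : ℝ :=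
  1 + ∫ y in (0:ℝ)..x, pkl k ℓ y

/-- Chernoff bound for truncated exponentials. -/
lemma taylorExp_chernoff (d : ℕ) (t c : ℝ) (ht : 0 ≤ t) (hc : 1 ≤ c) :
    taylorExp d t ≤ c ^ d * Real.exp (t / c) := by
  have h0 : 0 < c := by linarith
  calc taylorExp d t ≤ ∑ m ∈ Finset.range (d + 1), c ^ d * ((t / c) ^ m / (Nat.factorial m : ℝ)) := by
        unfold taylorExp
        apply Finset.sum_le_sum
        intro m hm
        have hmd : m ≤ d := by have := Finset.mem_range.1 hm; omega
        have h1 : c ^ m ≤ c ^ d := pow_le_pow_right₀ hc hmd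
        rw [← mul_div_assoc]
        apply div_le_div_of_nonneg_right _ (by positivity)
        calc t ^ m = c ^ m * (t / c) ^ m := by
              rw [← mul_pow]; congr 1; field_simp
          _ ≤ c ^ d * (t / c) ^ m := by gcongr
    _ = c ^ d * ∑ m ∈ Finset.range (d + 1), ((t / c) ^ m / (Nat.factorial m : ℝ)) := by
        rw [Finset.mul_sum]
    _ ≤ _ := by
        gcongr
        exact Real.sum_le_exp_of_nonneg (by positivity) _

lemma taylorExp_abs_le (d : ℕ) (y : ℝ) : |taylorExp d y| ≤ taylorExp d |y| := by
  unfold taylorExp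
  refine (Finset.abs_sum_le_sum_abs _ _).trans (le_of_eq ?_)
  apply Finset.sum_congr rfl
  intro m _
  rw [abs_div, abs_pow, Nat.abs_cast]

lemma taylorExp_nonneg (d : ℕ) (t : ℝ) (ht : 0 ≤ t) : 0 ≤ taylorExp d t := by
  unfold taylorExp
  positivity

lemma taylorExp_le_exp (d : ℕ) (t : ℝ) (ht : 0 ≤ t) : taylorExp d t ≤ Real.exp t :=
  Real.sum_le_exp_of_nonneg ht _

/-- Chernoff bound for the tail. -/
lemma taylorExp_tail (d : ℕ) (y c : ℝ) (hc : 1 ≤ c) :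
    c ^ d * |taylorExp d y - Real.exp y| ≤ Real.exp (c * |y|) := by
  have h0 : 0 < c := by linarith
  have hs : ∀ z : ℝ, HasSum (fun m : ℕ => z ^ m / (Nat.factorial m : ℝ)) (Real.exp z) := by
    intro z
    rw [Real.exp_eq_exp_ℝ]
    exact NormedSpace.expSeries_div_hasSum_exp z
  have ht : ∀ z : ℝ, HasSum (fun m : ℕ => z ^ (m + (d + 1)) / (Nat.factorial (m + (d + 1)) : ℝ))
      (Real.exp z - taylorExp d z) := by
    intro z
    exact (hasSum_nat_add_iff' (d + 1)).2 (hs z)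
  have h1 : |Real.exp y - taylorExp d y| ≤ Real.exp |y| - taylorExp d |y| := by
    rw [← (ht y).tsum_eq, ← (ht |y|).tsum_eq, ← Real.norm_eq_abs]
    have e : (fun m : ℕ => |y| ^ (m + (d + 1)) / (Nat.factorial (m + (d + 1)) : ℝ))
      = fun m : ℕ => ‖y ^ (m + (d + 1)) / (Nat.factorial (m + (d + 1)) : ℝ)‖ := by
      funext m
      rw [Real.norm_eq_abs, abs_div, abs_pow, Nat.abs_cast]
    rw [e]
    apply norm_tsum_le_tsum_norm
    rw [← e]
    exact (ht |y|).summable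
  have h2 : c ^ d * (Real.exp |y| - taylorExp d |y|) ≤
      Real.exp (c * |y|) - taylorExp d (c * |y|) := by
    apply hasSum_le _ ((ht |y|).mul_left (c ^ d)) (ht (c * |y|))
    intro m
    rw [← mul_div_assoc]
    apply div_le_div_of_nonneg_right _ (by positivity)
    rw [mul_pow]
    have : c ^ d ≤ c ^ (m + (d + 1)) := pow_le_pow_right₀ hc (by omega)
    gcongr
  have h3 := taylorExp_nonneg d (c * |y|) (by positivity)
  rw [abs_sub_comm]
  have h4 := mul_le_mul_of_nonneg_left h1 (by positivity : 0 ≤ c ^ d)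
  linarith

lemma taylorExp_rel (d ℓ : ℕ) (y : ℝ) (hd : 2 * ℓ ≤ d) (hy : |y| ≤ ℓ / 4) :
    |taylorExp d y - Real.exp y| ≤ Real.exp (-(ℓ:ℝ)) * Real.exp y := by
  have h := taylorExp_tail d y 4 (by norm_num)
  have h4 : Real.exp (9 / 8) ≤ 4 := by
    rw [← Real.le_log_iff_exp_le (by norm_num)]
    have h2 : Real.log 4 = 2 * Real.log 2 := by
      rw [show (4:ℝ) = 2 ^ 2 by norm_num, Real.log_pow]; norm_num
    have := Real.log_two_gt_d9
    rw [h2]; linarith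
  have h5 : Real.exp (9 / 4 * ℓ) ≤ (4:ℝ) ^ d := by
    calc Real.exp (9 / 4 * ℓ) = Real.exp (9 / 8) ^ (2 * ℓ) := by
          rw [← Real.exp_nat_mul]; congr 1; push_cast; ring
      _ ≤ 4 ^ (2 * ℓ) := by gcongr
      _ ≤ 4 ^ d := pow_le_pow_right₀ (by norm_num) hd
  have h6 : Real.exp (9 / 4 * ℓ) * |taylorExp d y - Real.exp y| ≤ Real.exp (4 * |y|) :=
    (mul_le_mul_of_nonneg_right h5 (abs_nonneg _)).trans h
  have hy2 := neg_abs_le y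
  have h7 : Real.exp (4 * |y|) ≤ Real.exp (9 / 4 * ℓ) * (Real.exp (-(ℓ:ℝ)) * Real.exp y) := by
    rw [← Real.exp_add, ← Real.exp_add]
    apply Real.exp_le_exp.2
    linarith
  exact le_of_mul_le_mul_left (h6.trans h7) (Real.exp_pos _)

lemma taylorExp_abs_le_one (d : ℕ) (t : ℝ) (ht : 0 ≤ t) (hd : 200 ≤ d) (htd : 14 / 5 * t ≤ d) :
    |taylorExp d (-t)| ≤ 1 := by
  have hA : |taylorExp d (-t)| ≤ Real.exp (-t) + |taylorExp d (-t) - Real.exp (-t)| := by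
    have := abs_add_le (Real.exp (-t)) (taylorExp d (-t) - Real.exp (-t))
    rw [abs_of_pos (Real.exp_pos _)] at this
    simpa using this
  have hE : Real.exp (-t) * (1 + t) ≤ 1 := by
    have h1 : 1 + t ≤ Real.exp t := by linarith [Real.add_one_le_exp t]
    calc Real.exp (-t) * (1 + t) ≤ Real.exp (-t) * Real.exp t := by gcongr
      _ = 1 := by rw [← Real.exp_add]; simp
  have hEp := Real.exp_pos (-t)
  rcases eq_or_lt_of_le ht with h0 | hpos
  · subst h0
    simp [taylorExp, Finset.sum_range_succ']
  rcases le_or_gt t (1 / 4) with hs | hl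
  · have h := taylorExp_tail d (-t) (1 / t) (by rw [le_div_iff₀ hpos]; linarith)
    rw [abs_neg, abs_of_pos hpos, div_mul_cancel₀ _ hpos.ne', div_pow, one_pow, div_mul_eq_mul_div,
      one_mul, div_le_iff₀ (by positivity)] at h
    have h2 : t ^ d ≤ t ^ 2 := pow_le_pow_of_le_one ht (by linarith) (by omega)
    have h3 := Real.exp_one_lt_three
    have h5 : Real.exp 1 * t ^ d ≤ 3 * t ^ 2 := by gcongr
    nlinarith
  · have h := taylorExp_tail d (-t) (14 / 5) (by norm_num)
    rw [abs_neg, abs_of_pos hpos] at h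
    have h1 : Real.exp (14 / 5 * t) ≤ (Real.exp 1) ^ d := by
      rw [← Real.exp_nat_mul]; apply Real.exp_le_exp.2; linarith
    have h2 : Real.exp 1 ^ d ≤ (14 / 5 * (39 / 40)) ^ d := by
      have := Real.exp_one_lt_d9
      gcongr
      norm_num at this ⊢; linarith
    rw [mul_pow] at h2
    have h3 : |taylorExp d (-t) - Real.exp (-t)| ≤ (39 / 40) ^ d :=
      le_of_mul_le_mul_left (h.trans (h1.trans h2)) (by positivity)
    have h4 : ((39:ℝ) / 40) ^ d ≤ (39 / 40) ^ 200 :=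
      pow_le_pow_of_le_one (by norm_num) (by norm_num) hd
    have h5 : ((39:ℝ) / 40) ^ 200 ≤ 1 / 5 := by norm_num
    nlinarith

lemma prod_chernoff (ℓ : ℕ) (t : ℝ) (ht : 0 ≤ t) (N : ℕ) : ∀ c : ℝ, 1 ≤ c →
    ∏ j ∈ Finset.Icc 1 N, taylorExp (2 ^ j * ℓ) t ≤
      (2 * c) ^ (2 * (2 ^ N * ℓ)) * Real.exp (2 * t / c) := by
  induction N with
  | zero =>
    intro c hc
    simp only [zero_lt_one, Finset.Icc_eq_empty_of_lt, Finset.prod_empty]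
    apply one_le_mul_of_one_le_of_one_le
    · exact one_le_pow₀ (by linarith)
    · exact Real.one_le_exp (by positivity)
  | succ N ih =>
    intro c hc
    rw [Finset.prod_Icc_succ_top (by omega)]
    have h1 := ih (2 * c) (by linarith)
    have h2 := taylorExp_chernoff (2 ^ (N + 1) * ℓ) t c ht hc
    have h3 := taylorExp_nonneg (2 ^ (N + 1) * ℓ) t ht
    refine (mul_le_mul h1 h2 h3 (by positivity)).trans (le_of_eq ?_)
    have e1 : 2 * (2 ^ N * ℓ) = 2 ^ (N + 1) * ℓ := by ring
    have e2 : 2 * t / (2 * c) = t / c := by field_simp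
    have e3 : Real.exp (2 * t / c) = Real.exp (t / c) * Real.exp (t / c) := by
      rw [← Real.exp_add]; congr 1; ring
    rw [e1, e2, e3, pow_mul (2 * c) 2]
    generalize 2 ^ (N + 1) * ℓ = M
    rw [show (2 * c) ^ 2 = (2 * (2 * c)) * c by ring, mul_pow _ c]
    ring

lemma prod_neg_bound (ℓ : ℕ) (hℓ : 100 ≤ ℓ) (t : ℝ) (ht : 0 ≤ t) (K : ℕ) :
    ∏ j ∈ Finset.Icc 1 K, |taylorExp (2 ^ j * ℓ) (-t)| ≤ Real.exp (99 / 20 * t) := by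
  induction K with
  | zero => simpa using ht
  | succ K ih =>
    rcases le_or_gt (14 / 5 * t) ((2 ^ (K + 1) * ℓ : ℕ) : ℝ) with h | h
    · rw [Finset.prod_Icc_succ_top (by omega)]
      have h2 : 200 ≤ 2 ^ (K + 1) * ℓ := by
        have : 1 ≤ 2 ^ K := Nat.one_le_two_pow
        rw [pow_succ]; nlinarith
      have h1 := taylorExp_abs_le_one _ t ht h2 h
      calc _ ≤ Real.exp (99 / 20 * t) * 1 := mul_le_mul ih h1 (abs_nonneg _) (Real.exp_pos _).le
        _ = _ := mul_one _
    · have ha : ∀ j, |taylorExp (2 ^ j * ℓ) (-t)| ≤ taylorExp (2 ^ j * ℓ) t := by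
        intro j
        have := taylorExp_abs_le (2 ^ j * ℓ) (-t)
        rwa [abs_neg, abs_of_nonneg ht] at this
      have h1 : ∏ j ∈ Finset.Icc 1 (K + 1), |taylorExp (2 ^ j * ℓ) (-t)| ≤
          ∏ j ∈ Finset.Icc 1 (K + 1), taylorExp (2 ^ j * ℓ) t :=
        Finset.prod_le_prod (fun _ _ => abs_nonneg _) (fun j _ => ha j)
      rw [Finset.prod_Icc_succ_top (by omega : 1 ≤ K + 1) (fun j => taylorExp (2 ^ j * ℓ) t)] at h1
      have h2 := prod_chernoff ℓ t ht K 1 le_rfl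
      have h3 := taylorExp_le_exp (2 ^ (K + 1) * ℓ) t ht
      refine h1.trans ((mul_le_mul h2 h3 (taylorExp_nonneg _ _ ht) (by positivity)).trans ?_)
      have e1 : 2 * (2 ^ K * ℓ) = 2 ^ (K + 1) * ℓ := by ring
      have e2 : ((2:ℝ) * 1) ^ (2 ^ (K + 1) * ℓ) =
          Real.exp (((2 ^ (K + 1) * ℓ : ℕ) : ℝ) * Real.log 2) := by
        rw [Real.exp_nat_mul, Real.exp_log (by norm_num), mul_one]
      rw [e1, e2, ← Real.exp_add, ← Real.exp_add]
      apply Real.exp_le_exp.2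
      have hl := Real.log_two_lt_d9
      have hl0 := Real.log_two_gt_d9
      have : ((2 ^ (K + 1) * ℓ : ℕ) : ℝ) * Real.log 2 ≤ 14 / 5 * t * 0.6932 := by
        apply mul_le_mul h.le (by linarith) (by linarith) (by positivity)
      linarith

lemma pkl_neg_bound (k ℓ : ℕ) (hℓ : 100 ≤ ℓ) (x : ℝ) (hx : x ≤ 0) :
    |pkl k ℓ x| ≤ Real.exp (99 / 20 * (-x / k)) := by
  have := prod_neg_bound ℓ hℓ (-x / k) (div_nonneg (by linarith) (by positivity)) k
  unfold pkl
  rw [Finset.abs_prod]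
  simpa [neg_div] using this

lemma pkl_pos_bound (k ℓ : ℕ) (hk : 0 < k) (x : ℝ) (hx : 0 ≤ x) :
    0 ≤ pkl k ℓ x ∧ pkl k ℓ x ≤ Real.exp x := by
  have h0 : 0 ≤ x / k := by positivity
  unfold pkl
  constructor
  · exact Finset.prod_nonneg fun _ _ => taylorExp_nonneg _ _ h0
  · calc _ ≤ ∏ j ∈ Finset.Icc 1 k, Real.exp (x / k) :=
          Finset.prod_le_prod (fun _ _ => taylorExp_nonneg _ _ h0)
            (fun _ _ => taylorExp_le_exp _ _ h0)
      _ = Real.exp x := by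
          rw [Finset.prod_const, Nat.card_Icc, ← Real.exp_nat_mul]
          congr 1
          have : (k:ℝ) ≠ 0 := by positivity
          simp; field_simp

lemma pkl_rel (k ℓ : ℕ) (hk : 0 < k) (hθ : k * Real.exp (-(ℓ:ℝ)) ≤ 1) (x : ℝ)
    (hx : |x| ≤ k * ℓ / 4) :
    |pkl k ℓ x - Real.exp x| ≤ 2 * k * Real.exp (-(ℓ:ℝ)) * Real.exp x := by
  have hkp : (0:ℝ) < k := by positivity
  set y := x / k with hy
  have hxy : x = k * y := by rw [hy]; field_simp
  have hy4 : |y| ≤ ℓ / 4 := by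
    rw [hy, abs_div, Nat.abs_cast, div_le_iff₀ hkp]; linarith
  set r : ℕ → ℝ := fun j => (taylorExp (2 ^ j * ℓ) y - Real.exp y) / Real.exp y with hr
  have hrb : ∀ j ∈ Finset.Icc 1 k, ‖r j‖ ≤ Real.exp (-(ℓ:ℝ)) := by
    intro j hj
    have hj1 := (Finset.mem_Icc.1 hj).1
    have h2 : 2 ≤ 2 ^ j := by
      calc 2 = 2 ^ 1 := rfl
        _ ≤ 2 ^ j := Nat.pow_le_pow_right (by norm_num) hj1
    have := taylorExp_rel (2 ^ j * ℓ) ℓ y (Nat.mul_le_mul_right _ h2) hy4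
    rw [hr, Real.norm_eq_abs, abs_div, abs_of_pos (Real.exp_pos y), div_le_iff₀ (Real.exp_pos _)]
    exact this
  have hp : pkl k ℓ x = Real.exp x * ∏ j ∈ Finset.Icc 1 k, (1 + r j) := by
    have e : Real.exp x = ∏ j ∈ Finset.Icc 1 k, Real.exp y := by
      rw [Finset.prod_const, Nat.card_Icc, ← Real.exp_nat_mul, hxy]; simp
    rw [e, ← Finset.prod_mul_distrib]
    unfold pkl
    apply Finset.prod_congr rfl
    intro j _
    have := (Real.exp_pos y).ne'
    simp only [hr, ← hy]
    field_simp
    ring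
  have h1 := Finset.norm_prod_one_add_sub_one_le (Finset.Icc 1 k) r
  have h2 : ∑ j ∈ Finset.Icc 1 k, ‖r j‖ ≤ k * Real.exp (-(ℓ:ℝ)) := by
    have := Finset.sum_le_card_nsmul _ _ _ hrb
    simpa using this
  have h3 : Real.exp (k * Real.exp (-(ℓ:ℝ))) - 1 ≤ 2 * (k * Real.exp (-(ℓ:ℝ))) := by
    have hn : 0 ≤ k * Real.exp (-(ℓ:ℝ)) := by positivity
    have := Real.abs_exp_sub_one_le (x := k * Real.exp (-(ℓ:ℝ))) (by rwa [abs_of_nonneg hn])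
    rw [abs_of_nonneg hn] at this
    exact (le_abs_self _).trans this
  have h4 := Real.exp_le_exp.2 h2
  rw [Real.norm_eq_abs] at h1
  rw [hp, show Real.exp x * ∏ j ∈ Finset.Icc 1 k, (1 + r j) - Real.exp x =
    Real.exp x * (∏ j ∈ Finset.Icc 1 k, (1 + r j) - 1) by ring, abs_mul,
    abs_of_pos (Real.exp_pos x), mul_comm]
  apply mul_le_mul_of_nonneg_right _ (Real.exp_pos x).le
  linarith

lemma pkl_continuous (k ℓ : ℕ) : Continuous (pkl k ℓ) := by
  unfold pkl taylorExp
  fun_prop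

lemma qkl_rel (k ℓ : ℕ) (hk : 0 < k) (hθ : k * Real.exp (-(ℓ:ℝ)) ≤ 1) (x : ℝ)
    (hx : |x| ≤ k * ℓ / 4) :
    |qkl k ℓ x - Real.exp x| ≤ 2 * k * Real.exp (-(ℓ:ℝ)) * |Real.exp x - 1| := by
  have hc := pkl_continuous k ℓ
  have e : qkl k ℓ x - Real.exp x = ∫ y in (0:ℝ)..x, (pkl k ℓ y - Real.exp y) := by
    rw [intervalIntegral.integral_sub (hc.intervalIntegrable _ _)
      (Real.continuous_exp.intervalIntegrable _ _), integral_exp, Real.exp_zero]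
    unfold qkl; ring
  have h := intervalIntegral.norm_integral_le_abs_of_norm_le (μ := MeasureTheory.volume)
    (a := 0) (b := x)
    (f := fun y => pkl k ℓ y - Real.exp y)
    (g := fun y => 2 * k * Real.exp (-(ℓ:ℝ)) * Real.exp y) (by
      filter_upwards [MeasureTheory.ae_restrict_mem measurableSet_uIoc] with y hy
      apply pkl_rel k ℓ hk hθ
      refine le_trans ?_ hx
      rcases Set.mem_uIoc.1 hy with h | h
      · rw [abs_of_pos h.1, abs_of_pos (by linarith)]; exact h.2
      · rw [abs_of_nonpos h.2, abs_of_nonpos (by linarith)]; linarith)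
    (by apply Continuous.intervalIntegrable; fun_prop)
  rw [e, ← Real.norm_eq_abs]
  refine h.trans (le_of_eq ?_)
  rw [intervalIntegral.integral_const_mul, integral_exp, Real.exp_zero, abs_mul,
    abs_of_nonneg (by positivity)]

lemma qkl_pos_bound (k ℓ : ℕ) (hk : 0 < k) (x : ℝ) (hx : 0 ≤ x) :
    0 ≤ qkl k ℓ x ∧ qkl k ℓ x ≤ Real.exp x := by
  have hc := pkl_continuous k ℓ
  unfold qkl
  have h1 : 0 ≤ ∫ y in (0:ℝ)..x, pkl k ℓ y :=
    intervalIntegral.integral_nonneg hx fun y hy => (pkl_pos_bound k ℓ hk y hy.1).1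
  have h2 : ∫ y in (0:ℝ)..x, pkl k ℓ y ≤ ∫ y in (0:ℝ)..x, Real.exp y :=
    intervalIntegral.integral_mono_on hx (hc.intervalIntegrable _ _)
      (Real.continuous_exp.intervalIntegrable _ _) fun y hy => (pkl_pos_bound k ℓ hk y hy.1).2
  rw [integral_exp, Real.exp_zero] at h2
  constructor <;> linarith

lemma qkl_neg_bound (k ℓ : ℕ) (hk : 0 < k) (hℓ : 100 ≤ ℓ) (x : ℝ) (hx : x ≤ 0) :
    |qkl k ℓ x| ≤ k * Real.exp (99 / 20 * (-x / k)) := by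
  have hk1 : (1:ℝ) ≤ k := by exact_mod_cast hk
  have hkp : (0:ℝ) < k := by linarith
  have h := intervalIntegral.norm_integral_le_abs_of_norm_le (μ := MeasureTheory.volume)
    (a := 0) (b := x)
    (f := fun y => pkl k ℓ y)
    (g := fun y => Real.exp (99 / 20 * (-y / k))) (by
      filter_upwards [MeasureTheory.ae_restrict_mem measurableSet_uIoc] with y hy
      apply pkl_neg_bound k ℓ hℓ
      rcases Set.mem_uIoc.1 hy with h | h
      · linarith [h.1, h.2]
      · exact h.2)
    (by apply Continuous.intervalIntegrable; fun_prop)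
  have hi : ∫ y in (0:ℝ)..x, Real.exp (99 / 20 * (-y / k)) =
      -(20 / 99 * k) * Real.exp (99 / 20 * (-x / k)) - -(20 / 99 * k) * Real.exp (99 / 20 * (-0 / k)) := by
    apply intervalIntegral.integral_eq_sub_of_hasDerivAt
      (f := fun y => -(20 / 99 * k) * Real.exp (99 / 20 * (-y / k)))
    · intro y _
      have h1 : HasDerivAt (fun y : ℝ => 99 / 20 * (-y / k)) (99 / 20 * (-1 / k)) y :=
        (((hasDerivAt_id y).neg).div_const _).const_mul _
      have h2 := h1.exp.const_mul (-(20 / 99 * (k:ℝ)))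
      refine h2.congr_deriv ?_
      have : (k:ℝ) ≠ 0 := hkp.ne'
      field_simp
    · apply Continuous.intervalIntegrable; fun_prop
  have hE : 1 ≤ Real.exp (99 / 20 * (-x / k)) := by
    apply Real.one_le_exp
    have : 0 ≤ -x / k := div_nonneg (by linarith) hkp.le
    positivity
  rw [hi] at h
  simp only [neg_zero, zero_div, mul_zero, Real.exp_zero, mul_one, Real.norm_eq_abs] at h
  set E := Real.exp (99 / 20 * (-x / k))
  have h2 : |-(20 / 99 * (k:ℝ)) * E - -(20 / 99 * k)| = 20 / 99 * k * (E - 1) := by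
    rw [abs_of_nonpos (by nlinarith)]; ring
  rw [h2] at h
  unfold qkl
  have h3 := abs_add_le 1 (∫ y in (0:ℝ)..x, pkl k ℓ y)
  rw [abs_one] at h3
  nlinarith


/-- **Flat approximations to the exponential.**
Given `ε, η ∈ (0,1)` and `κ ≥ 1`, if `k ≥ 5/η` and `ℓ ≥ 100(κ + log(k/ε))`, then both
`p_{k,ℓ}` and `q_{k,ℓ}` are `(κ, η, ε)`-flat exponential approximations: they are
`ε`-close to `e^x` on `[-κ, κ]`, and everywhere bounded by `max(1, e^x) e^{η|x|}`. -/
theorem flat_exponential_approximation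
    (ε η κ : ℝ) (hε0 : 0 < ε) (hε1 : ε < 1) (hη0 : 0 < η) (hη1 : η < 1)
    (hκ : 1 ≤ κ) (k ℓ : ℕ) (hk : 0 < k) (hℓ : 0 < ℓ)
    (hk5 : 5 / η ≤ (k : ℝ))
    (hℓ100 : 100 * (κ + Real.log ((k : ℝ) / ε)) ≤ (ℓ : ℝ)) :
    ∀ f : ℝ → ℝ, (f = pkl k ℓ ∨ f = qkl k ℓ) →
      (∀ x ∈ Set.Icc (-κ) κ, |f x - Real.exp x| ≤ ε) ∧
      (∀ x : ℝ, |f x| ≤ max 1 (Real.exp x) * Real.exp (η * |x|)) := by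
  have hkη : 5 ≤ η * k := by
    rw [div_le_iff₀ hη0] at hk5; linarith
  have hk1 : (1:ℝ) ≤ k := by exact_mod_cast hk
  have hkp : (0:ℝ) < k := by linarith
  have hlogk : 0 ≤ Real.log k := Real.log_nonneg hk1
  have hlogε : Real.log ε ≤ 0 := Real.log_nonpos hε0.le hε1.le
  have hL : Real.log ((k:ℝ) / ε) = Real.log k - Real.log ε :=
    Real.log_div hkp.ne' hε0.ne'
  have hℓ' : 100 ≤ ℓ := by
    have : (100:ℝ) ≤ ℓ := by linarith
    exact_mod_cast this
  have hℓk : Real.log k ≤ ℓ / 100 := by linarith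
  have hθε : 2 * k * Real.exp (-(ℓ:ℝ)) * Real.exp κ ≤ ε := by
    have h1 : Real.exp (-(ℓ:ℝ)) * Real.exp κ ≤
        Real.exp (-1) * Real.exp (-Real.log ((k:ℝ) / ε)) := by
      rw [← Real.exp_add, ← Real.exp_add]
      apply Real.exp_le_exp.2
      linarith
    have h2 : Real.exp (-Real.log ((k:ℝ) / ε)) = ε / k := by
      rw [Real.exp_neg, Real.exp_log (by positivity), inv_div]
    have h3 : Real.exp (-1) * 2 ≤ 1 := by
      calc Real.exp (-1) * 2 ≤ Real.exp (-1) * Real.exp 1 := by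
            gcongr; linarith [Real.add_one_le_exp 1]
        _ = 1 := by rw [← Real.exp_add]; simp
    calc 2 * k * Real.exp (-(ℓ:ℝ)) * Real.exp κ = 2 * k * (Real.exp (-(ℓ:ℝ)) * Real.exp κ) := by ring
      _ ≤ 2 * k * (Real.exp (-1) * (ε / k)) := by rw [← h2]; gcongr
      _ = (Real.exp (-1) * 2) * ε := by field_simp
      _ ≤ 1 * ε := by gcongr
      _ = ε := one_mul _
  have hθ1 : 2 * k * Real.exp (-(ℓ:ℝ)) ≤ 1 := by
    have : 1 ≤ Real.exp κ := Real.one_le_exp (by linarith)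
    have h0 : 0 ≤ 2 * k * Real.exp (-(ℓ:ℝ)) := by positivity
    nlinarith
  have hθ : k * Real.exp (-(ℓ:ℝ)) ≤ 1 := by
    have h0 : 0 ≤ k * Real.exp (-(ℓ:ℝ)) := by positivity
    linarith
  have hsmall : ∀ x ∈ Set.Icc (-κ) κ, |x| ≤ k * ℓ / 4 := by
    intro x hx
    have h1 : |x| ≤ κ := abs_le.2 hx
    have h2 : 4 * κ ≤ ℓ := by linarith
    nlinarith
  have hposb : ∀ v x : ℝ, 0 ≤ x → 0 ≤ v → v ≤ Real.exp x →
      |v| ≤ max 1 (Real.exp x) * Real.exp (η * |x|) := by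
    intro v x hx h0 h1
    rw [abs_of_nonneg h0]
    have h2 : 1 ≤ Real.exp (η * |x|) := Real.one_le_exp (by positivity)
    calc v ≤ max 1 (Real.exp x) := h1.trans (le_max_right _ _)
      _ ≤ _ := le_mul_of_one_le_right (by positivity) h2
  have hnegb : ∀ v x : ℝ, x ≤ 0 → |v| ≤ Real.exp (5 * (-x / k)) →
      |v| ≤ max 1 (Real.exp x) * Real.exp (η * |x|) := by
    intro v x hx h1
    have h2 : Real.exp (5 * (-x / k)) ≤ Real.exp (η * |x|) := by
      apply Real.exp_le_exp.2
      rw [abs_of_nonpos hx, ← mul_div_assoc, div_le_iff₀ hkp]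
      nlinarith
    calc |v| ≤ Real.exp (η * |x|) := h1.trans h2
      _ ≤ _ := le_mul_of_one_le_left (Real.exp_pos _).le (le_max_left _ _)
  rintro f (rfl | rfl)
  · constructor
    · intro x hx
      refine (pkl_rel k ℓ hk hθ x (hsmall x hx)).trans (le_trans ?_ hθε)
      gcongr
      exact hx.2
    · intro x
      rcases le_total 0 x with hx | hx
      · exact hposb _ x hx (pkl_pos_bound k ℓ hk x hx).1 (pkl_pos_bound k ℓ hk x hx).2
      · apply hnegb _ x hx
        refine (pkl_neg_bound k ℓ hℓ' x hx).trans (Real.exp_le_exp.2 ?_)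
        have : 0 ≤ -x / k := div_nonneg (by linarith) hkp.le
        linarith
  · constructor
    · intro x hx
      refine (qkl_rel k ℓ hk hθ x (hsmall x hx)).trans (le_trans ?_ hθε)
      gcongr
      have h1 := Real.exp_pos x
      have h2 := Real.exp_le_exp.2 hx.2
      have h3 : 1 ≤ Real.exp κ := Real.one_le_exp (by linarith)
      rw [abs_le]; constructor <;> linarith
    · intro x
      rcases le_total 0 x with hx | hx
      · exact hposb _ x hx (qkl_pos_bound k ℓ hk x hx).1 (qkl_pos_bound k ℓ hk x hx).2
      · apply hnegb _ x hx
        have ht : 0 ≤ -x / k := div_nonneg (by linarith) hkp.le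
        rcases le_or_gt |x| (k * ℓ / 4) with hs | hs
        · have h := qkl_rel k ℓ hk hθ x hs
          have h1 : Real.exp x ≤ 1 := Real.exp_le_one_iff.2 hx
          have h2 := Real.exp_pos x
          rw [abs_of_nonpos (by linarith : Real.exp x - 1 ≤ 0)] at h
          have h3 : 2 * k * Real.exp (-(ℓ:ℝ)) * -(Real.exp x - 1) ≤ 1 * -(Real.exp x - 1) :=
            mul_le_mul_of_nonneg_right hθ1 (by linarith)
          have h4 := abs_le.1 (h.trans h3)
          have h5 : 1 ≤ Real.exp (5 * (-x / k)) := Real.one_le_exp (by positivity)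
          refine le_trans ?_ h5
          rw [abs_le]; constructor <;> linarith [h4.1, h4.2]
        · refine (qkl_neg_bound k ℓ hk hℓ' x hx).trans ?_
          rw [abs_of_nonpos hx] at hs
          have hs' : (ℓ:ℝ) / 4 ≤ -x / k := by
            rw [le_div_iff₀ hkp]; linarith
          nth_rewrite 1 [← Real.exp_log hkp]
          rw [← Real.exp_add]
          apply Real.exp_le_exp.2
          linarith
end

section
/- For all positive integers k, ℓ, the bivariate real polynomial 0.5(x − y)(1 + 0.25(x − y)^2)(q_{k,ℓ}(x) − q_{k,ℓ}(y)) − 0.00025(x − y)^2 p_{k,ℓ}(x) is a (10^{2^k ℓ}, 2^k ℓ + 10, 200^{2^k ℓ})-bounded sum-of-squares polynomial in the variables x and y. -/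
open scoped BigOperators

/-- The total degree of a monomial (exponent vector). -/
def monomialDeg {σ : Type*} (m : σ →₀ ℕ) : ℕ := m.sum fun _ e => e

/-- A multivariate real polynomial is `(d, C)`-bounded if it has (total) degree at most
`d` and every coefficient of a monomial of degree `d' ≤ d` has magnitude at most `C/d'!`. -/
def MvBounded {σ : Type*} (d : ℕ) (C : ℝ) (f : MvPolynomial σ ℝ) : Prop :=
  f.totalDegree ≤ d ∧
  ∀ m : σ →₀ ℕ, monomialDeg m ≤ d →
    |MvPolynomial.coeff m f| ≤ C / (Nat.factorial (monomialDeg m) : ℝ)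

/-- A multivariate real polynomial is a `(k, d, C)`-bounded sum-of-squares polynomial if
it can be written as `q₁² + ⋯ + q_k²` with each `qᵢ` a `(d, C)`-bounded polynomial. -/
def MvSoSBounded {σ : Type*} (k d : ℕ) (C : ℝ) (f : MvPolynomial σ ℝ) : Prop :=
  ∃ g : Fin k → MvPolynomial σ ℝ, (∀ i, MvBounded d C (g i)) ∧ f = ∑ i, (g i) ^ 2

open Polynomial in
theorem two_sq_of_nonneg (m : ℕ) : ∀ P : Polynomial ℝ, P.natDegree ≤ 2 * m → (∀ x, 0 ≤ P.eval x) →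
    ∃ a b : Polynomial ℝ, a.natDegree ≤ m ∧ b.natDegree ≤ m ∧ P = a ^ 2 + b ^ 2 := by
  induction m with
  | zero =>
    intro P hd hP
    have h := Polynomial.eq_C_of_natDegree_le_zero (by simpa using hd)
    have h0 : 0 ≤ P.coeff 0 := by
      have := hP 0
      rw [h] at this
      simpa using this
    refine ⟨C (Real.sqrt (P.coeff 0)), 0, by simp, by simp, ?_⟩
    rw [← C_pow, Real.sq_sqrt h0]
    simpa using h
  | succ m ih =>
    intro P hd hP
    by_cases hd' : P.natDegree ≤ 2 * m
    · obtain ⟨a, b, ha, hb, h⟩ := ih P hd' hP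
      exact ⟨a, b, by omega, by omega, h⟩
    have hP0 : P ≠ 0 := by
      rintro rfl
      simp at hd'
    have hpos : 0 < P.natDegree := by omega
    obtain ⟨z, hz⟩ : ∃ z : ℂ, aeval z P = 0 :=
      IsAlgClosed.exists_aeval_eq_zero _ P (Polynomial.natDegree_pos_iff_degree_pos.mp hpos).ne'
    -- common: factor through a sum-of-two-squares quadratic
    have key : ∀ (u v : ℝ), ((X - C u) ^ 2 + C v ^ 2 ∣ P) →
        ∃ a b : Polynomial ℝ, a.natDegree ≤ m + 1 ∧ b.natDegree ≤ m + 1 ∧ P = a ^ 2 + b ^ 2 := by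
      rintro u v ⟨Q, hQ⟩
      have hq2 : ((X - C u) ^ 2 + C v ^ 2 : ℝ[X]).natDegree = 2 := by
        have : ((X - C u) ^ 2 + C v ^ 2 : ℝ[X]) = C 1 * X ^ 2 + C (-2 * u) * X + C (u ^ 2 + v ^ 2) := by
          simp only [C_add, C_mul, C_pow, C_neg, C_1, C_ofNat]
          ring
        rw [this]
        exact natDegree_quadratic one_ne_zero
      have hQ0 : Q ≠ 0 := by
        rintro rfl
        simp at hQ
        exact hP0 hQ
      have hq0 : ((X - C u) ^ 2 + C v ^ 2 : ℝ[X]) ≠ 0 := by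
        intro h
        rw [h] at hq2
        simp at hq2
      have hQd : Q.natDegree ≤ 2 * m := by
        have := natDegree_mul hq0 hQ0
        rw [← hQ, hq2] at this
        omega
      have hQn' : ∀ x ∈ ({u}ᶜ : Set ℝ), 0 ≤ Q.eval x := by
        intro x hx
        have h1 := hP x
        rw [hQ] at h1
        simp at h1
        have hx' : x - u ≠ 0 := sub_ne_zero.mpr hx
        have : 0 < (x - u) ^ 2 + v ^ 2 := by positivity
        exact nonneg_of_mul_nonneg_right h1 this
      have hQn : ∀ x, 0 ≤ Q.eval x := by
        have hcl : IsClosed {x : ℝ | 0 ≤ Q.eval x} :=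
          isClosed_le continuous_const Q.continuous
        have hd : Dense ({u}ᶜ : Set ℝ) := dense_compl_singleton u
        intro x
        have := hcl.closure_subset_iff.mpr hQn'
        rw [hd.closure_eq] at this
        exact this (Set.mem_univ x)
      obtain ⟨a, b, ha, hb, h⟩ := ih Q hQd hQn
      refine ⟨(X - C u) * a - C v * b, (X - C u) * b + C v * a, ?_, ?_, ?_⟩
      · refine (natDegree_sub_le _ _).trans (max_le ?_ ?_)
        · refine natDegree_mul_le.trans ?_
          rw [natDegree_X_sub_C]; omega
        · refine natDegree_mul_le.trans ?_
          rw [natDegree_C]; omega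
      · refine (natDegree_add_le _ _).trans (max_le ?_ ?_)
        · refine natDegree_mul_le.trans ?_
          rw [natDegree_X_sub_C]; omega
        · refine natDegree_mul_le.trans ?_
          rw [natDegree_C]; omega
      · rw [hQ, h]; ring
    by_cases him : z.im = 0
    · -- real root
      have hzr : z = (z.re : ℂ) := by
        apply Complex.ext <;> simp [him]
      have hroot : P.eval z.re = 0 := by
        rw [hzr] at hz
        have h2 : (aeval ((algebraMap ℝ ℂ) z.re) P) = algebraMap ℝ ℂ (aeval z.re P) :=
          aeval_algebraMap_apply ℂ z.re P
        rw [Complex.coe_algebraMap, hz] at h2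
        have h3 : aeval z.re P = 0 := by exact_mod_cast h2.symm
        simpa [coe_aeval_eq_eval] using h3
      have hder : P.derivative.eval z.re = 0 := by
        have hmin : IsLocalMin (fun x => P.eval x) z.re := by
          refine Filter.Eventually.of_forall fun x => ?_
          simp only [hroot]
          exact hP x
        have := hmin.hasDerivAt_eq_zero (P.hasDerivAt z.re)
        exact this
      apply key z.re 0
      obtain ⟨Q, hQ⟩ := dvd_iff_isRoot.mpr hroot
      have : Q.eval z.re = 0 := by
        rw [hQ] at hder
        simpa [derivative_mul] using hder
      obtain ⟨R, hR⟩ := dvd_iff_isRoot.mpr this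
      refine ⟨R, ?_⟩
      rw [hQ, hR]; simp; ring
    · apply key z.re z.im
      have h := P.quadratic_dvd_of_aeval_eq_zero_im_ne_zero hz him
      convert h using 1
      rw [Complex.sq_norm, Complex.normSq_apply]
      simp only [C_add, C_mul, C_ofNat]
      ring

open Polynomial in
/-- Taylor polynomial -/
noncomputable def tp (n : ℕ) : Polynomial ℝ := ∑ i ∈ Finset.range (n+1), C ((1:ℝ) / (i.factorial : ℝ)) * X ^ i

open Polynomial in
theorem tp_derivative (n : ℕ) : derivative (tp n) = tp n - C ((1:ℝ) / (n.factorial : ℝ)) * X ^ n := by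
  induction n with
  | zero => simp [tp]
  | succ n ih =>
    have h : tp (n+1) = tp n + C ((1:ℝ) / ((n+1).factorial : ℝ)) * X ^ (n+1) := by
      rw [tp, Finset.sum_range_succ]; rfl
    rw [h, derivative_add, ih, derivative_C_mul_X_pow]
    have : (1:ℝ) / ((n+1).factorial : ℝ) * ((n+1 : ℕ) : ℝ) = 1 / (n.factorial : ℝ) := by
      rw [Nat.factorial_succ]; push_cast; field_simp
    rw [this]; simp

open Polynomial in
theorem tp_natDegree (n : ℕ) : (tp n).natDegree ≤ n := by
  refine natDegree_sum_le_of_forall_le _ _ fun i hi => ?_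
  refine (natDegree_C_mul_X_pow_le _ _).trans ?_
  simp at hi; omega

open Polynomial in
theorem tp_eval (n : ℕ) (x : ℝ) : (tp n).eval x = ∑ k ∈ Finset.range (n + 1), x ^ k / (Nat.factorial k : ℝ) := by
  simp [tp, eval_finsetSum, div_eq_inv_mul]

open Polynomial in
theorem tp_neg_deriv (n : ℕ) (hn : Even n) (c : ℝ) (r : ℝ) :
    HasDerivAt (fun r => Real.exp r * ((tp n).eval (-r) - c * (r ^ n / n.factorial)))
      (Real.exp r * (r ^ n / n.factorial - c * (r ^ n / n.factorial) - c * (n * r ^ (n-1) / n.factorial))) r := by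
  have h1 : HasDerivAt (fun r : ℝ => (tp n).eval (-r)) (-((tp n).derivative.eval (-r))) r := by
    have := ((tp n).hasDerivAt (-r)).comp r (hasDerivAt_neg r)
    exact this.congr_deriv (by simp)
  have h2 : HasDerivAt (fun r : ℝ => c * (r ^ n / (n.factorial:ℝ))) (c * (n * r ^ (n-1) / n.factorial)) r :=
    ((hasDerivAt_pow n r).div_const _).const_mul c
  have := (Real.hasDerivAt_exp r).mul (h1.sub h2)
  refine this.congr_deriv ?_
  rw [tp_derivative]
  simp [hn.neg_pow]
  ring

theorem tp_ge (n : ℕ) (hn : Even n) (hn0 : 0 < n) (x : ℝ) :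
    x ^ n / (10 * n.factorial) ≤ (tp n).eval x := by
  have hf : (0:ℝ) < n.factorial := by exact_mod_cast n.factorial_pos
  by_cases hx : 0 ≤ x
  · rw [tp_eval]
    have h1 := Finset.single_le_sum (f := fun k => x ^ k / (Nat.factorial k : ℝ)) (s := Finset.range (n+1))
      (fun i _ => by positivity) (Finset.mem_range.mpr (Nat.lt_succ_self n))
    refine le_trans ?_ h1
    gcongr
    linarith
  · have hn' : (0:ℝ) < n := by exact_mod_cast hn0
    obtain ⟨r, rfl⟩ : ∃ r, x = -r := ⟨-x, by simp⟩
    have hr : 0 ≤ r := by linarith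
    rw [hn.neg_pow]
    -- first: f ≥ exp(-r)
    have hexp : ∀ r : ℝ, 0 ≤ r → 1 ≤ Real.exp r * (tp n).eval (-r) := by
      have hm : MonotoneOn (fun r => Real.exp r * ((tp n).eval (-r) - 0 * (r ^ n / n.factorial))) (Set.Ici 0) := by
        apply monotoneOn_of_deriv_nonneg (convex_Ici 0)
        · exact fun r _ => (tp_neg_deriv n hn 0 r).continuousAt.continuousWithinAt
        · exact fun r _ => (tp_neg_deriv n hn 0 r).differentiableAt.differentiableWithinAt
        · intro r hr
          rw [(tp_neg_deriv n hn 0 r).deriv]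
          have : 0 ≤ r ^ n := hn.pow_nonneg r
          simp
          positivity
      intro r hr
      have := hm (Set.self_mem_Ici) (Set.mem_Ici.mpr hr) hr
      simp at this
      have h0 : (tp n).eval 0 = 1 := by
        rw [tp_eval, Finset.sum_range_succ']; simp
      rw [h0] at this
      linarith
    have small : ∀ r : ℝ, 0 ≤ r → r ≤ n / 9 →
        0 ≤ Real.exp r * ((tp n).eval (-r) - (1/10) * (r ^ n / n.factorial)) := by
      intro r hr hrn
      have h1 := hexp r hr
      have h2 : r ^ n / n.factorial ≤ Real.exp (-r) := by
        -- (n)^n / n! ≤ exp n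
        have h3 : (n:ℝ) ^ n / n.factorial ≤ Real.exp n := Real.pow_div_factorial_le_exp _ hn'.le n
        have h4 : r ^ n ≤ (n / 9) ^ n := by gcongr
        have h5 : Real.exp 1 ≤ 3 := by
          have := Real.exp_one_lt_d9; linarith
        have h6 : Real.exp n = Real.exp 1 ^ n := by rw [← Real.exp_nat_mul]; simp
        calc r ^ n / n.factorial ≤ (n / 9) ^ n / n.factorial := by gcongr
          _ = ((n:ℝ) ^ n / n.factorial) * (1/9) ^ n := by rw [div_pow, div_pow]; ring
          _ ≤ Real.exp n * (1/9)^n := by gcongr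
          _ ≤ Real.exp (-n) := by
            rw [Real.exp_neg, h6, ← mul_pow, ← inv_pow]
            gcongr
            rw [le_inv_comm₀ (by positivity) (by positivity)]
            have hp := Real.exp_pos 1
            rw [inv_eq_one_div, le_div_iff₀ (by positivity)]
            nlinarith
          _ ≤ Real.exp (-r) := by
            apply Real.exp_le_exp.mpr
            linarith
      have h7 : Real.exp r * (r ^ n / n.factorial) ≤ 1 := by
        calc _ ≤ Real.exp r * Real.exp (-r) := by gcongr
          _ = 1 := by rw [← Real.exp_add]; simp
      have h8 : 0 ≤ Real.exp r * (r ^ n / n.factorial) := by positivity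
      nlinarith
    have all : 0 ≤ Real.exp r * ((tp n).eval (-r) - (1/10) * (r ^ n / n.factorial)) := by
      rcases le_total r (n/9) with h | h
      · exact small r hr h
      · have hm : MonotoneOn (fun r => Real.exp r * ((tp n).eval (-r) - (1/10) * (r ^ n / n.factorial))) (Set.Ici (n/9:ℝ)) := by
          apply monotoneOn_of_deriv_nonneg (convex_Ici _)
          · exact fun r _ => (tp_neg_deriv n hn _ r).continuousAt.continuousWithinAt
          · exact fun r _ => (tp_neg_deriv n hn _ r).differentiableAt.differentiableWithinAt
          · intro r hr
            rw [interior_Ici, Set.mem_Ioi] at hr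
            rw [(tp_neg_deriv n hn _ r).deriv]
            have hr0 : 0 < r := lt_trans (by positivity) hr
            have : r ^ n = r * r ^ (n-1) := by
              rw [← pow_succ']; congr 1; omega
            rw [this]
            have h9 : r * r ^ (n - 1) / n.factorial - 1 / 10 * (r * r ^ (n - 1) / n.factorial) - 1 / 10 * (n * r ^ (n - 1) / n.factorial)
              = (9 * r - n) * (r ^ (n-1) / n.factorial) / 10 := by ring
            rw [h9]
            have : 0 ≤ 9 * r - n := by linarith
            positivity
        have h1 := hm (Set.self_mem_Ici) (Set.mem_Ici.mpr h) h
        exact (small (n/9) (by positivity) le_rfl).trans h1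
    have := nonneg_of_mul_nonneg_right all (Real.exp_pos r)
    have h10 : r ^ n / (10 * n.factorial) = (1/10) * (r ^ n / n.factorial) := by
      field_simp
    rw [h10]; linarith

theorem tp_nonneg (n : ℕ) (hn : Even n) (hn0 : 0 < n) (x : ℝ) : 0 ≤ (tp n).eval x :=
  le_trans (div_nonneg (hn.pow_nonneg x) (by positivity)) (tp_ge n hn hn0 x)

theorem tp_le_exp (n : ℕ) (x : ℝ) (hx : 0 ≤ x) : (tp n).eval x ≤ Real.exp x := by
  rw [tp_eval]; exact Real.sum_le_exp_of_nonneg hx _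

open Polynomial in
/-- polynomial version of pkl -/
noncomputable def pp (k l : ℕ) : Polynomial ℝ := ∏ j ∈ Finset.Icc 1 k, (tp (2 ^ j * l)).comp (C ((1:ℝ)/k) * X)

open Polynomial in
theorem pp_facts (k l : ℕ) (hk : 0 < k) (hl : 0 < l) (x : ℝ) :
    0 ≤ (pp k l).eval x ∧ 0 ≤ (pp k l - derivative (pp k l)).eval x ∧
    0 ≤ (C 998 * pp k l + derivative (pp k l)).eval x := by
  have hk' : (0:ℝ) < k := by exact_mod_cast hk
  have hev : ∀ j ∈ Finset.Icc 1 k, Even (2 ^ j * l) ∧ 0 < 2 ^ j * l := by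
    intro j hj
    simp at hj
    exact ⟨((Nat.even_pow.mpr ⟨by decide, by omega⟩)).mul_right _, by positivity⟩
  have hnn : ∀ j ∈ Finset.Icc 1 k, 0 ≤ ((tp (2 ^ j * l)).comp (C ((1:ℝ)/k) * X)).eval x := by
    intro j hj
    rw [eval_comp]
    exact tp_nonneg _ (hev j hj).1 (hev j hj).2 _
  have hprod : ∀ j ∈ Finset.Icc 1 k, 0 ≤ (∏ i ∈ (Finset.Icc 1 k).erase j, (tp (2 ^ i * l)).comp (C ((1:ℝ)/k) * X)).eval x := by
    intro j hj
    rw [eval_prod]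
    exact Finset.prod_nonneg fun i hi => hnn i (Finset.mem_of_mem_erase hi)
  have hP : ∀ c : ℝ, c * (pp k l).eval x = ∑ j ∈ Finset.Icc 1 k, (1/k) * (∏ i ∈ (Finset.Icc 1 k).erase j, (tp (2 ^ i * l)).comp (C ((1:ℝ)/k) * X)).eval x * (c * ((tp (2 ^ j * l)).comp (C ((1:ℝ)/k) * X)).eval x) := by
    intro c
    have : ∀ j ∈ Finset.Icc 1 k, (1/k) * (∏ i ∈ (Finset.Icc 1 k).erase j, (tp (2 ^ i * l)).comp (C ((1:ℝ)/k) * X)).eval x * (c * ((tp (2 ^ j * l)).comp (C ((1:ℝ)/k) * X)).eval x) = 1/k * (c * (pp k l).eval x) := by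
      intro j hj
      rw [pp, ← Finset.prod_erase_mul _ _ hj, eval_mul]
      ring
    rw [Finset.sum_congr rfl this]
    simp
    field_simp
  have hD : (derivative (pp k l)).eval x = ∑ j ∈ Finset.Icc 1 k, (1/k) * (∏ i ∈ (Finset.Icc 1 k).erase j, (tp (2 ^ i * l)).comp (C ((1:ℝ)/k) * X)).eval x * (((tp (2 ^ j * l)).comp (C ((1:ℝ)/k) * X)).eval x - (x/k) ^ (2 ^ j * l) / (2 ^ j * l).factorial) := by
    rw [pp, derivative_prod_finset, eval_finsetSum]
    refine Finset.sum_congr rfl fun j hj => ?_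
    rw [eval_mul, derivative_comp, tp_derivative]
    simp [eval_comp]
    ring
  refine ⟨?_, ?_, ?_⟩
  · rw [pp, eval_prod]
    exact Finset.prod_nonneg hnn
  · rw [eval_sub, hD, ← one_mul (eval x (pp k l)), hP 1, ← Finset.sum_sub_distrib]
    refine Finset.sum_nonneg fun j hj => ?_
    rw [← mul_sub]
    have h1 := hprod j hj
    have h2 : 0 ≤ (x/k) ^ (2 ^ j * l) := (hev j hj).1.pow_nonneg _
    refine mul_nonneg (mul_nonneg (by positivity) h1) ?_
    have : 0 ≤ (x/k) ^ (2 ^ j * l) / (2 ^ j * l).factorial := by positivity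
    linarith
  · rw [eval_add, eval_mul, eval_C, hD, hP 998, ← Finset.sum_add_distrib]
    refine Finset.sum_nonneg fun j hj => ?_
    rw [← mul_add]
    refine mul_nonneg (mul_nonneg (by positivity) (hprod j hj)) ?_
    have h3 := tp_ge _ (hev j hj).1 (hev j hj).2 (x/k)
    have h4 := hnn j hj
    rw [eval_comp] at h4 ⊢
    have h5 : eval x (C (1/(k:ℝ)) * X) = x / k := by simp; ring
    rw [h5] at h4 ⊢
    have h6 : (x/k) ^ (2 ^ j * l) / (2 ^ j * l).factorial = 10 * ((x/k) ^ (2 ^ j * l) / (10 * (2 ^ j * l).factorial)) := by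
      field_simp
    rw [h6]; linarith

open Polynomial in
theorem pp_le_exp (k l : ℕ) (hk : 0 < k) (x : ℝ) (hx : 0 ≤ x) : (pp k l).eval x ≤ Real.exp x := by
  have hk' : (0:ℝ) < k := by exact_mod_cast hk
  rw [pp, eval_prod]
  calc _ ≤ ∏ j ∈ Finset.Icc 1 k, Real.exp (x/k) := by
        refine Finset.prod_le_prod ?_ ?_
        · intro i hi
          rw [eval_comp, tp_eval]
          refine Finset.sum_nonneg fun i _ => ?_
          simp
          positivity
        · intro i hi
          rw [eval_comp]
          have h5 : eval x (C (1/(k:ℝ)) * X) = x / k := by simp; ring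
          rw [h5]
          exact tp_le_exp _ _ (by positivity)
    _ = Real.exp x := by
      rw [Finset.prod_const, ← Real.exp_nat_mul]
      simp
      field_simp

open Polynomial in
theorem pp_natDegree (k l : ℕ) (hl : 0 < l) : ∃ m, m + 1 ≤ 2 ^ k * l ∧ (pp k l).natDegree ≤ 2 * m := by
  refine ⟨∑ j ∈ Finset.range k, 2 ^ j * l, ?_, ?_⟩
  · rw [← Finset.sum_mul]
    have : ∑ j ∈ Finset.range k, 2 ^ j + 1 = 2 ^ k := by
      have := Nat.geomSum_eq (le_refl 2) k
      simp at this
      have h2 : 0 < 2 ^ k := by positivity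
      omega
    rw [← this, add_mul]
    omega
  · rw [pp]
    refine (natDegree_prod_le _ _).trans ?_
    rw [Finset.mul_sum, Finset.range_eq_Ico]
    have h := Finset.sum_Ico_add' (fun j => 2 ^ j * l) 0 k 1
    have h2 : Finset.Ico (0+1) (k+1) = Finset.Icc 1 k := by ext; simp
    rw [h2] at h
    have h3 : ∀ j ∈ Finset.Ico 0 k, 2 * (2 ^ j * l) = 2 ^ (j+1) * l := by
      intro j _; ring
    rw [Finset.sum_congr rfl h3, h]
    refine Finset.sum_le_sum fun j _ => ?_
    refine natDegree_comp_le.trans ?_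
    have h4 : (C ((1:ℝ)/k) * X : ℝ[X]).natDegree ≤ 1 := (natDegree_C_mul_le _ _).trans natDegree_X_le
    calc _ ≤ (2 ^ j * l) * 1 := Nat.mul_le_mul (tp_natDegree _) h4
      _ = _ := by ring

open MvPolynomial in
theorem shift_expand (m : ℕ) (a : Polynomial ℝ) (ha : a.natDegree ≤ m) :
    ∃ A : Fin (m+1) → MvPolynomial (Fin 2) ℝ, (∀ c, (A c).totalDegree ≤ m) ∧
      ∀ x y t : ℝ, a.eval (x - t * (x - y)) = ∑ c : Fin (m+1), t ^ (c:ℕ) * eval ![x, y] (A c) := by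
  refine ⟨fun c => ∑ i ∈ Finset.range (m+1), C (a.coeff i * (i.choose c : ℝ)) * ((X 0) ^ (i - (c:ℕ)) * (X 1 - X 0) ^ (c:ℕ)), ?_, ?_⟩
  · intro c
    refine totalDegree_finsetSum_le fun i hi => ?_
    simp at hi
    by_cases hc : (c:ℕ) ≤ i
    · refine (totalDegree_mul _ _).trans ?_
      rw [totalDegree_C, zero_add]
      refine (totalDegree_mul _ _).trans ?_
      have h1 : ((X 0 : MvPolynomial (Fin 2) ℝ) ^ (i - (c:ℕ))).totalDegree ≤ i - c := by
        rw [totalDegree_X_pow]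
      have h2 : ((X 1 - X 0 : MvPolynomial (Fin 2) ℝ) ^ (c:ℕ)).totalDegree ≤ c := by
        refine (totalDegree_pow _ _).trans ?_
        have : (X 1 - X 0 : MvPolynomial (Fin 2) ℝ).totalDegree ≤ 1 := by
          refine (totalDegree_sub _ _).trans ?_
          simp
        nlinarith
      omega
    · rw [Nat.choose_eq_zero_of_lt (by omega)]
      simp
  · intro x y t
    rw [Polynomial.eval_eq_sum_range' (Nat.lt_succ_of_le ha)]
    simp only [map_sum, map_mul, eval_C, map_pow, eval_X, map_sub, Finset.mul_sum]
    rw [Finset.sum_comm]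
    refine Finset.sum_congr rfl fun i hi => ?_
    have hi' : i ≤ m := by simp at hi; omega
    have h1 : x - t * (x - y) = t * (y - x) + x := by ring
    rw [h1, add_pow]
    rw [Fin.sum_univ_eq_sum_range (fun c => t ^ c * (a.coeff i * (i.choose c : ℝ) * ((![x,y] 0) ^ (i - c) * (![x,y] 1 - ![x,y] 0) ^ c))) (m+1)]
    have hsub : Finset.range (i+1) ⊆ Finset.range (m+1) := by
      intro j; simp; omega
    rw [← Finset.sum_subset hsub, Finset.mul_sum]
    · refine Finset.sum_congr rfl fun c hc => ?_
      simp
      rw [mul_pow]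
      ring
    · intro c _ hc
      rw [Nat.choose_eq_zero_of_lt (by simpa using hc)]
      simp

open MvPolynomial in
theorem int_sq (m : ℕ) (a : Polynomial ℝ) (ha : a.natDegree ≤ m) (w : ℝ → ℝ) (hw : Continuous w)
    (hw0 : ∀ t ∈ Set.Icc (0:ℝ) 1, 0 ≤ w t) :
    ∃ G : Fin (m+1) → MvPolynomial (Fin 2) ℝ, (∀ c, (G c).totalDegree ≤ m) ∧
      ∀ x y : ℝ, ∫ t in (0:ℝ)..1, w t * (a.eval (x - t * (x - y))) ^ 2 = ∑ c, (eval ![x, y] (G c)) ^ 2 := by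
  obtain ⟨A, hA, hA2⟩ := shift_expand m a ha
  let H : Matrix (Fin (m+1)) (Fin (m+1)) ℝ := fun i j => ∫ t in (0:ℝ)..1, w t * t ^ ((i:ℕ) + (j:ℕ))
  have hquad : ∀ u : Fin (m+1) → ℝ, ∑ i, ∑ j, u i * H i j * u j = ∫ t in (0:ℝ)..1, w t * (∑ c : Fin (m+1), t ^ (c:ℕ) * u c) ^ 2 := by
    intro u
    have : ∀ t : ℝ, w t * (∑ c : Fin (m+1), t ^ (c:ℕ) * u c) ^ 2 = ∑ i : Fin (m+1), ∑ j : Fin (m+1), (u i * u j) * (w t * t ^ ((i:ℕ) + (j:ℕ))) := by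
      intro t
      rw [sq, Finset.sum_mul_sum, Finset.mul_sum]
      refine Finset.sum_congr rfl fun i _ => ?_
      rw [Finset.mul_sum]
      refine Finset.sum_congr rfl fun j _ => ?_
      rw [pow_add]; ring
    simp_rw [this]
    rw [intervalIntegral.integral_finsetSum]
    · refine Finset.sum_congr rfl fun i _ => ?_
      rw [intervalIntegral.integral_finsetSum]
      · refine Finset.sum_congr rfl fun j _ => ?_
        rw [intervalIntegral.integral_const_mul]
        simp only [H]
        ring
      · intro j _
        apply Continuous.intervalIntegrable
        fun_prop
    · intro i _
      apply Continuous.intervalIntegrable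
      fun_prop
  have hPSD : H.PosSemidef := by
    refine Matrix.PosSemidef.of_dotProduct_mulVec_nonneg ?_ ?_
    · ext i j
      rw [Matrix.conjTranspose_apply]
      simp [H, add_comm]
    · intro u
      have h1 : star u ⬝ᵥ (H.mulVec u) = ∑ i, ∑ j, u i * H i j * u j := by
        simp [dotProduct, Matrix.mulVec, Finset.mul_sum, mul_assoc]
      rw [h1, hquad]
      refine intervalIntegral.integral_nonneg zero_le_one fun t ht => ?_
      exact mul_nonneg (hw0 t ht) (sq_nonneg _)
  obtain ⟨B, hB⟩ : ∃ B : Matrix (Fin (m+1)) (Fin (m+1)) ℝ, H = B.conjTranspose * B := by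
    open scoped MatrixOrder in
    exact CStarAlgebra.nonneg_iff_eq_star_mul_self.mp hPSD.nonneg
  refine ⟨fun c => ∑ i, C (B c i) * A i, ?_, ?_⟩
  · intro c
    refine totalDegree_finsetSum_le fun i hi => ?_
    refine (totalDegree_mul _ _).trans ?_
    rw [totalDegree_C, zero_add]
    exact hA i
  · intro x y
    simp_rw [hA2]
    rw [← hquad (fun c => eval ![x,y] (A c))]
    have : ∀ i j, H i j = ∑ c, B c i * B c j := by
      intro i j
      rw [hB]; simp [Matrix.mul_apply]
    simp_rw [this]
    simp only [map_sum, map_mul, eval_C, sq, Finset.sum_mul_sum, Finset.mul_sum, Finset.sum_mul]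
    rw [Finset.sum_comm_cycle]
    refine Finset.sum_congr rfl fun c _ => ?_
    rw [Finset.sum_comm]
    refine Finset.sum_congr rfl fun i _ => Finset.sum_congr rfl fun j _ => ?_
    ring

open Polynomial in
/-- Newton basis `binom(X, i)`. -/
noncomputable def nb : ℕ → Polynomial ℝ
  | 0 => 1
  | (i+1) => C (1 / ((i:ℝ)+1)) * (nb i * (X - C (i:ℝ)))

open Polynomial in
theorem nb_natDegree (i : ℕ) : (nb i).natDegree ≤ i := by
  induction i with
  | zero => simp [nb]
  | succ i ih =>
    rw [nb]
    refine (natDegree_C_mul_le _ _).trans (natDegree_mul_le.trans ?_)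
    rw [natDegree_X_sub_C]; omega

open Polynomial in
theorem nb_eval (i n : ℕ) : (nb i).eval (n:ℝ) = (n.choose i : ℝ) := by
  induction i with
  | zero => simp [nb]
  | succ i ih =>
    rw [nb]
    simp only [eval_mul, eval_C, eval_sub, eval_X, ih]
    have h := Nat.choose_succ_right_eq n i
    have h' : (n.choose (i+1) : ℝ) * ((i:ℝ)+1) = n.choose i * ((n:ℝ) - i) := by
      rcases le_total i n with hin | hin
      · have : ((n - i : ℕ):ℝ) = (n:ℝ) - i := by push_cast [hin]; ring
        rw [← this]; exact_mod_cast h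
      · rcases hin.eq_or_lt with h1 | h1
        · subst h1; simp
        · rw [Nat.choose_eq_zero_of_lt h1, Nat.choose_eq_zero_of_lt (by omega)]; simp
    have : (i:ℝ) + 1 ≠ 0 := by positivity
    field_simp
    linarith

open Polynomial in
theorem nb_coeff (i : ℕ) : ∀ j : ℕ, (j.factorial : ℝ) * |(nb i).coeff j| ≤ 2 ^ i := by
  induction i with
  | zero =>
    intro j
    rw [nb, coeff_one]
    by_cases hj : j = 0
    · simp [hj]
    · simp [hj]
  | succ i ih =>
    intro j
    have hi : (0:ℝ) < (i:ℝ) + 1 := by positivity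
    rw [nb, coeff_C_mul, abs_mul, abs_of_pos (by positivity : (0:ℝ) < 1 / ((i:ℝ)+1))]
    have hp : (0:ℝ) < 2 ^ i := by positivity
    rw [mul_left_comm, one_div, inv_mul_le_iff₀ hi]
    cases j with
    | zero =>
      have : ((nb i * (X - C (i:ℝ))).coeff 0) = (nb i).coeff 0 * (-i) := by
        rw [mul_coeff_zero]; simp
      rw [this, abs_mul, abs_neg, Nat.abs_cast]
      have h0 := ih 0
      have : (0:ℝ) ≤ i := by positivity
      rw [pow_succ]
      nlinarith [abs_nonneg ((nb i).coeff 0)]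
    | succ j =>
      have : ((nb i * (X - C (i:ℝ))).coeff (j+1)) = (nb i).coeff j - (nb i).coeff (j+1) * i := by
        rw [mul_sub, coeff_sub, coeff_mul_X, coeff_mul_C]
      rw [this]
      have h1 := ih j
      have h2 := ih (j+1)
      have h3 : |(nb i).coeff j - (nb i).coeff (j+1) * i| ≤ |(nb i).coeff j| + |(nb i).coeff (j+1)| * i := by
        refine (abs_sub _ _).trans ?_
        rw [abs_mul, Nat.abs_cast]
      have hf : (0:ℝ) < (j+1).factorial := by exact_mod_cast (j+1).factorial_pos
      have h4 : ((j+1).factorial : ℝ) = ((j:ℝ)+1) * j.factorial := by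
        rw [Nat.factorial_succ]; push_cast; ring
      have hi0 : (0:ℝ) ≤ i := by positivity
      by_cases hj : i < j
      · have e1 : (nb i).coeff j = 0 := coeff_eq_zero_of_natDegree_lt (lt_of_le_of_lt (nb_natDegree i) hj)
        have e2 : (nb i).coeff (j+1) = 0 := coeff_eq_zero_of_natDegree_lt (lt_of_le_of_lt (nb_natDegree i) (by omega))
        rw [e1, e2]; simp; positivity
      · have hj' : (j:ℝ) ≤ i := by exact_mod_cast (not_lt.mp hj)
        calc _ ≤ ((j+1).factorial : ℝ) * (|(nb i).coeff j| + |(nb i).coeff (j+1)| * i) := by gcongr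
          _ = ((j:ℝ)+1) * (j.factorial * |(nb i).coeff j|) + i * ((j+1).factorial * |(nb i).coeff (j+1)|) := by
            rw [h4]; ring
          _ ≤ ((j:ℝ)+1) * 2 ^ i + i * 2 ^ i := by gcongr
          _ ≤ ((i:ℝ)+1) * 2 ^ i + (i+1) * 2 ^ i := by gcongr; linarith
          _ = _ := by ring

/-- signed binomial weights of the forward difference -/
noncomputable def fw (i a : ℕ) : ℝ := (-1) ^ (i - a) * (i.choose a : ℝ)

/-- forward difference of the power function at zero -/
noncomputable def fd (i c : ℕ) : ℝ := ∑ a ∈ Finset.range (i+1), fw i a * (a:ℝ) ^ c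

theorem fd_eq (i c : ℕ) : fd i c = (fwdDiff (1:ℝ))^[i] (fun r : ℝ => r ^ c) 0 := by
  rw [fwdDiff_iter_eq_sum_shift, fd]
  refine Finset.sum_congr rfl fun a _ => ?_
  simp [fw]

theorem fd_zero (i c : ℕ) (h : c < i) : fd i c = 0 := by
  rw [fd_eq, fwdDiff_iter_pow_eq_zero_of_lt h]; rfl

open Polynomial in
theorem newton_pow (c : ℕ) : (X ^ c : Polynomial ℝ) = ∑ i ∈ Finset.range (c+1), C (fd i c) * nb i := by
  apply Polynomial.eq_of_infinite_eval_eq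
  refine Set.Infinite.mono (s := Set.range (fun n : ℕ => (n:ℝ))) ?_ (Set.infinite_range_of_injective Nat.cast_injective)
  rintro _ ⟨n, rfl⟩
  simp only [Set.mem_ofPred_eq, eval_pow, eval_X, eval_finsetSum, eval_mul, eval_C, nb_eval]
  have h := shift_eq_sum_fwdDiff_iter (1:ℝ) (fun r : ℝ => r ^ c) n 0
  simp only [← fd_eq] at h
  simp at h
  rw [h]
  have e1 : ∑ i ∈ Finset.range (n+1), (n.choose i : ℝ) * fd i c = ∑ i ∈ Finset.range (n+c+1), (n.choose i : ℝ) * fd i c := by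
    apply Finset.sum_subset
    · intro j; simp; omega
    · intro j _ hj
      rw [Nat.choose_eq_zero_of_lt (by simpa using hj)]; simp
  have e2 : ∑ i ∈ Finset.range (c+1), fd i c * (n.choose i : ℝ) = ∑ i ∈ Finset.range (n+c+1), fd i c * (n.choose i : ℝ) := by
    apply Finset.sum_subset
    · intro j; simp; omega
    · intro j _ hj
      rw [fd_zero _ _ (by simpa using hj)]; simp
  rw [e1, e2]
  exact Finset.sum_congr rfl fun i _ => mul_comm _ _

theorem newton_coeff (c a : ℕ) : ∑ i ∈ Finset.range (c+1), fd i c * (nb i).coeff a = if a = c then 1 else 0 := by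
  have h := congrArg (fun p => Polynomial.coeff p a) (newton_pow c)
  simp only [Polynomial.coeff_X_pow, Polynomial.finsetSum_coeff, Polynomial.coeff_C_mul] at h
  exact h.symm

/-- triangular index set -/
def tri (D : ℕ) : Finset (ℕ × ℕ) := ((Finset.range (D+1)) ×ˢ (Finset.range (D+1))).filter (fun p => p.1 + p.2 ≤ D)

theorem newton_coeff2 (D c d a b : ℕ) (h : c + d ≤ D) :
    ∑ p ∈ tri D, (fd p.1 c * fd p.2 d) * ((nb p.1).coeff a * (nb p.2).coeff b) = if a = c ∧ b = d then 1 else 0 := by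
  have hsub : (Finset.range (c+1)) ×ˢ (Finset.range (d+1)) ⊆ tri D := by
    intro p; simp [tri]; omega
  rw [← Finset.sum_subset hsub]
  · have e : ∀ p ∈ (Finset.range (c+1)) ×ˢ (Finset.range (d+1)),
        (fd p.1 c * fd p.2 d) * ((nb p.1).coeff a * (nb p.2).coeff b) = (fd p.1 c * (nb p.1).coeff a) * (fd p.2 d * (nb p.2).coeff b) := by
      intros; ring
    rw [Finset.sum_congr rfl e, Finset.sum_product]
    simp only []
    rw [← Finset.sum_mul_sum, newton_coeff, newton_coeff]
    split_ifs <;> simp_all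
  · intro p _ hp
    simp at hp
    by_cases h1 : p.1 ≤ c
    · rw [fd_zero p.2 d (by omega)]; simp
    · rw [fd_zero p.1 c (by omega)]; simp

open MvPolynomial in
theorem coeff_formula (D : ℕ) (g : MvPolynomial (Fin 2) ℝ) (hg : g.totalDegree ≤ D) (μ : Fin 2 →₀ ℕ) :
    coeff μ g = ∑ p ∈ tri D, (∑ a ∈ Finset.range (p.1+1), ∑ b ∈ Finset.range (p.2+1), fw p.1 a * fw p.2 b * eval ![(a:ℝ), (b:ℝ)] g)
      * ((nb p.1).coeff (μ 0) * (nb p.2).coeff (μ 1)) := by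
  have h1 : ∀ a b : ℕ, eval ![(a:ℝ), (b:ℝ)] g = ∑ ν ∈ g.support, coeff ν g * ((a:ℝ) ^ (ν 0) * (b:ℝ) ^ (ν 1)) := by
    intro a b
    rw [eval_eq']
    simp [Fin.prod_univ_two]
  have h2 : ∀ p : ℕ × ℕ, (∑ a ∈ Finset.range (p.1+1), ∑ b ∈ Finset.range (p.2+1), fw p.1 a * fw p.2 b * eval ![(a:ℝ), (b:ℝ)] g)
      = ∑ ν ∈ g.support, coeff ν g * (fd p.1 (ν 0) * fd p.2 (ν 1)) := by
    intro p
    simp_rw [h1, fd, Finset.sum_mul_sum, Finset.mul_sum]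
    rw [Finset.sum_comm_cycle]
    refine Finset.sum_congr rfl fun ν _ => ?_
    refine Finset.sum_congr rfl fun a _ => Finset.sum_congr rfl fun b _ => ?_
    ring
  simp_rw [h2, Finset.sum_mul]
  rw [Finset.sum_comm]
  have h3 : ∀ ν ∈ g.support, ∑ p ∈ tri D, coeff ν g * (fd p.1 (ν 0) * fd p.2 (ν 1)) * ((nb p.1).coeff (μ 0) * (nb p.2).coeff (μ 1))
      = if ν = μ then coeff ν g else 0 := by
    intro ν hν
    have hdeg : ν 0 + ν 1 ≤ D := by
      have := (le_totalDegree hν).trans hg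
      rw [Finsupp.sum_fintype _ _ (by simp)] at this
      simpa [Fin.sum_univ_two] using this
    simp_rw [mul_assoc (coeff ν g)]
    rw [← Finset.mul_sum, newton_coeff2 D _ _ _ _ hdeg]
    have : (μ 0 = ν 0 ∧ μ 1 = ν 1) ↔ ν = μ := by
      constructor
      · rintro ⟨h, h'⟩
        ext i; fin_cases i
        · exact h.symm
        · exact h'.symm
      · rintro rfl; simp
    simp only [this]
    split_ifs <;> simp
  rw [Finset.sum_congr rfl h3]
  simp

theorem tri_sum (D : ℕ) : ∑ p ∈ tri D, (4:ℝ) ^ p.1 * 4 ^ p.2 ≤ ((D:ℝ)+1) * 4 ^ (D+1) / 3 := by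
  rw [tri, Finset.sum_filter, Finset.sum_product]
  have h : ∀ i ∈ Finset.range (D+1), ∑ j ∈ Finset.range (D+1), (if i + j ≤ D then (4:ℝ) ^ i * 4 ^ j else 0) ≤ 4 ^ (D+1) / 3 := by
    intro i hi
    simp at hi
    rw [← Finset.sum_filter]
    calc _ ≤ ∑ j ∈ Finset.range (D+1-i), (4:ℝ) ^ i * 4 ^ j := by
          apply Finset.sum_le_sum_of_subset_of_nonneg
          · intro j; simp; omega
          · intros; positivity
      _ = 4 ^ i * ((4 ^ (D+1-i) - 1) / (4 - 1)) := by
          rw [← Finset.mul_sum, geom_sum_eq (by norm_num)]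
      _ = (4 ^ (i + (D+1-i)) - 4 ^ i) / 3 := by rw [pow_add]; ring
      _ ≤ _ := by
        rw [show i + (D+1-i) = D+1 by omega]
        have : (0:ℝ) < 4 ^ i := by positivity
        linarith
  refine (Finset.sum_le_sum h).trans ?_
  simp
  apply le_of_eq; ring

open MvPolynomial in
theorem coeff_bound (D : ℕ) (g : MvPolynomial (Fin 2) ℝ) (hg : g.totalDegree ≤ D) (M : ℝ)
    (hM : ∀ a b : ℕ, a + b ≤ D → |eval ![(a:ℝ), (b:ℝ)] g| ≤ M) (μ : Fin 2 →₀ ℕ) :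
    ((μ 0).factorial : ℝ) * (μ 1).factorial * |coeff μ g| ≤ M * (((D:ℝ)+1) * 4 ^ (D+1) / 3) := by
  have hM0 : 0 ≤ M := (abs_nonneg _).trans (hM 0 0 (by omega))
  have hfw : ∀ i, ∑ a ∈ Finset.range (i+1), |fw i a| = 2 ^ i := by
    intro i
    have : ∀ a ∈ Finset.range (i+1), |fw i a| = (i.choose a : ℝ) := by
      intro a _
      rw [fw, abs_mul, abs_pow]; simp
    rw [Finset.sum_congr rfl this]
    exact_mod_cast Nat.sum_range_choose i
  rw [coeff_formula D g hg μ]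
  calc _ ≤ ((μ 0).factorial : ℝ) * (μ 1).factorial * ∑ p ∈ tri D, (2 ^ p.1 * 2 ^ p.2 * M) * (|(nb p.1).coeff (μ 0)| * |(nb p.2).coeff (μ 1)|) := by
        gcongr
        refine (Finset.abs_sum_le_sum_abs _ _).trans (Finset.sum_le_sum fun p hp => ?_)
        rw [abs_mul, abs_mul ((nb p.1).coeff (μ 0))]
        gcongr
        refine (Finset.abs_sum_le_sum_abs _ _).trans ?_
        calc _ ≤ ∑ a ∈ Finset.range (p.1+1), ∑ b ∈ Finset.range (p.2+1), |fw p.1 a| * |fw p.2 b| * M := by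
              refine Finset.sum_le_sum fun a ha => (Finset.abs_sum_le_sum_abs _ _).trans (Finset.sum_le_sum fun b hb => ?_)
              rw [abs_mul, abs_mul]
              gcongr
              apply hM
              simp [tri] at ha hb hp
              omega
          _ = 2 ^ p.1 * 2 ^ p.2 * M := by
            simp_rw [← Finset.sum_mul]
            rw [← Finset.sum_mul_sum, hfw, hfw]
    _ = M * ∑ p ∈ tri D, (2 ^ p.1 * ((μ 0).factorial * |(nb p.1).coeff (μ 0)|)) * (2 ^ p.2 * ((μ 1).factorial * |(nb p.2).coeff (μ 1)|)) := by
        rw [Finset.mul_sum, Finset.mul_sum]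
        refine Finset.sum_congr rfl fun p _ => ?_
        ring
    _ ≤ M * ∑ p ∈ tri D, (2 ^ p.1 * 2 ^ p.1) * (2 ^ p.2 * 2 ^ p.2) := by
        gcongr
        · exact nb_coeff _ _
        · exact nb_coeff _ _
    _ = M * ∑ p ∈ tri D, (4:ℝ) ^ p.1 * 4 ^ p.2 := by
        simp_rw [← mul_pow]; norm_num
    _ ≤ _ := by
        gcongr
        exact tri_sum D

open MvPolynomial in
/-- `f` is a sum of `n` squares of polynomials of degree at most `D`. -/
def SS (n D : ℕ) (f : ℝ → ℝ → ℝ) : Prop :=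
  ∃ g : Fin n → MvPolynomial (Fin 2) ℝ, (∀ i, (g i).totalDegree ≤ D) ∧
    ∀ x y, f x y = ∑ i, (eval ![x, y] (g i)) ^ 2

theorem SS.add {n n' D : ℕ} {f f' : ℝ → ℝ → ℝ} (h : SS n D f) (h' : SS n' D f') :
    SS (n + n') D (fun x y => f x y + f' x y) := by
  obtain ⟨g, hg, e⟩ := h
  obtain ⟨g', hg', e'⟩ := h'
  refine ⟨Fin.append g g', ?_, ?_⟩
  · intro i
    refine Fin.addCases (fun i => ?_) (fun i => ?_) i
    · simpa using hg i
    · simpa using hg' i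
  · intro x y
    simp only [Fin.sum_univ_add, Fin.append_left, Fin.append_right, e, e']

theorem SS.pad {n n' D : ℕ} {f : ℝ → ℝ → ℝ} (h : SS n D f) (hn : n ≤ n') : SS n' D f := by
  obtain ⟨d, rfl⟩ := Nat.exists_eq_add_of_le hn
  have h0 : SS d D (fun _ _ => 0) := ⟨fun _ => 0, by simp, by simp⟩
  simpa using h.add h0

open MvPolynomial in
theorem SS.mulc {n D D' : ℕ} {f : ℝ → ℝ → ℝ} (h : SS n D f) (c : ℝ) (hc : 0 ≤ c)
    (q : MvPolynomial (Fin 2) ℝ) (hq : q.totalDegree + D ≤ D') :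
    SS n D' (fun x y => c * (eval ![x, y] q) ^ 2 * f x y) := by
  obtain ⟨g, hg, e⟩ := h
  refine ⟨fun i => C (Real.sqrt c) * (q * g i), ?_, ?_⟩
  · intro i
    refine (totalDegree_mul _ _).trans ?_
    rw [totalDegree_C, zero_add]
    refine (totalDegree_mul _ _).trans ?_
    have := hg i
    omega
  · intro x y
    simp only [e, Finset.mul_sum]
    refine Finset.sum_congr rfl fun i _ => ?_
    simp only [map_mul, eval_C, mul_pow, Real.sq_sqrt hc]
    ring

theorem int_SS (m : ℕ) (P : Polynomial ℝ) (hd : P.natDegree ≤ 2 * m) (hP : ∀ x, 0 ≤ P.eval x)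
    (w : ℝ → ℝ) (hw : Continuous w) (hw0 : ∀ t ∈ Set.Icc (0:ℝ) 1, 0 ≤ w t) :
    SS ((m+1) + (m+1)) m (fun x y => ∫ t in (0:ℝ)..1, w t * P.eval (x - t * (x - y))) := by
  obtain ⟨a, b, ha, hb, rfl⟩ := two_sq_of_nonneg m P hd hP
  have h1 : SS (m+1) m _ := int_sq m a ha w hw hw0
  have h2 : SS (m+1) m _ := int_sq m b hb w hw hw0
  convert h1.add h2 using 3 with x y
  rw [← intervalIntegral.integral_add]
  · congr 1; ext t; simp; ring
  · apply Continuous.intervalIntegrable; fun_prop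
  · apply Continuous.intervalIntegrable; fun_prop

theorem pp_eval (k l : ℕ) (x : ℝ) : (pp k l).eval x = pkl k l x := by
  rw [pp, pkl, Polynomial.eval_prod]
  refine Finset.prod_congr rfl fun j _ => ?_
  rw [Polynomial.eval_comp, tp_eval, taylorExp]
  simp [div_eq_inv_mul]

theorem pkl_cont (k l : ℕ) : Continuous (pkl k l) := by
  have : pkl k l = fun x => (pp k l).eval x := by ext x; rw [pp_eval]
  rw [this]; fun_prop

/-- The target function. -/
noncomputable def tgt (k ℓ : ℕ) (x y : ℝ) : ℝ := 0.5 * (x - y) * (1 + 0.25 * (x - y) ^ 2) * (qkl k ℓ x - qkl k ℓ y)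
          - 0.00025 * (x - y) ^ 2 * pkl k ℓ x

theorem q_diff (P : Polynomial ℝ) (x y : ℝ) :
    (x - y) * ∫ t in (0:ℝ)..1, P.eval (x - t * (x - y)) = ∫ z in y..x, P.eval z := by
  have h := intervalIntegral.mul_integral_comp_sub_mul (a := 0) (b := 1) (f := fun z => P.eval z) (x - y) x
  simp at h
  rw [← h]
  congr 1
  congr 1
  ext t
  ring_nf

theorem by_parts (P : Polynomial ℝ) (x y : ℝ) :
    (x - y) * ∫ t in (0:ℝ)..1, (1 - t) * P.derivative.eval (x - t * (x - y))
      = P.eval x - ∫ t in (0:ℝ)..1, P.eval (x - t * (x - y)) := by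
  have hd : ∀ t : ℝ, HasDerivAt (fun t => -((1 - t) * P.eval (x - t * (x - y))))
      ((x - y) * ((1 - t) * P.derivative.eval (x - t * (x - y))) + P.eval (x - t * (x - y))) t := by
    intro t
    have h1 : HasDerivAt (fun t : ℝ => x - t * (x - y)) (-(x - y)) t := by
      simpa using ((hasDerivAt_id t).mul_const (x - y)).const_sub x
    have h2 : HasDerivAt (fun t : ℝ => P.eval (x - t * (x - y))) (P.derivative.eval (x - t * (x - y)) * (-(x - y))) t :=
      HasDerivAt.comp (h₂ := fun z => P.eval z) t (P.hasDerivAt (x - t * (x - y))) h1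
    have h3 : HasDerivAt (fun t : ℝ => 1 - t) (-1) t := by
      simpa using (hasDerivAt_id t).const_sub 1
    refine (h3.mul h2).neg.congr_deriv ?_
    ring
  have hI := intervalIntegral.integral_eq_sub_of_hasDerivAt (a := 0) (b := 1) (fun t _ => hd t)
    (by apply Continuous.intervalIntegrable; fun_prop)
  rw [intervalIntegral.integral_add, intervalIntegral.integral_const_mul] at hI
  · simp at hI
    linarith
  · apply Continuous.intervalIntegrable; fun_prop
  · apply Continuous.intervalIntegrable; fun_prop

theorem q_sub (k l : ℕ) (x y : ℝ) : qkl k l x - qkl k l y = ∫ z in y..x, (pp k l).eval z := by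
  simp_rw [pp_eval]
  rw [qkl, qkl]
  have := intervalIntegral.integral_add_adjacent_intervals (μ := MeasureTheory.volume)
    ((pkl_cont k l).intervalIntegrable 0 y) ((pkl_cont k l).intervalIntegrable y x)
  linarith

open MvPolynomial in
theorem tgt_SS (k l m : ℕ) (hk : 0 < k) (hl : 0 < l) (hm : (pp k l).natDegree ≤ 2 * m) :
    SS (7 * ((m+1) + (m+1))) (m+2) (tgt k l) := by
  have hf := pp_facts k l hk hl
  have hdd : (Polynomial.derivative (pp k l)).natDegree ≤ 2 * m :=
    (Polynomial.natDegree_derivative_le _).trans (by omega)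
  have hd2 : (pp k l - Polynomial.derivative (pp k l)).natDegree ≤ 2 * m :=
    (Polynomial.natDegree_sub_le _ _).trans (max_le hm hdd)
  have hd3 : (Polynomial.C 998 * pp k l + Polynomial.derivative (pp k l)).natDegree ≤ 2 * m :=
    (Polynomial.natDegree_add_le _ _).trans (max_le ((Polynomial.natDegree_C_mul_le _ _).trans hm) hdd)
  have J1 := int_SS m _ hm (fun x => (hf x).1) (fun t => 1 - t) (by fun_prop) (fun t ht => by linarith [ht.2])
  have J2 := int_SS m _ hd2 (fun x => (hf x).2.1) (fun t => 1 - t) (by fun_prop) (fun t ht => by linarith [ht.2])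
  have J3 := int_SS m _ hd3 (fun x => (hf x).2.2) (fun t => 1 - t) (by fun_prop) (fun t ht => by linarith [ht.2])
  have K := int_SS m _ hm (fun x => (hf x).1) (fun t => t) (by fun_prop) (fun t ht => ht.1)
  have I := int_SS m _ hm (fun x => (hf x).1) (fun _ => 1) (by fun_prop) (fun t ht => zero_le_one)
  have hh : (X 0 - X 1 : MvPolynomial (Fin 2) ℝ).totalDegree ≤ 1 := (totalDegree_sub _ _).trans (by simp)
  have d2 : ∀ q : MvPolynomial (Fin 2) ℝ, q.totalDegree ≤ 1 → ((X 0 - X 1) * q).totalDegree + m ≤ m + 2 := by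
    intro q hq
    have := totalDegree_mul (X 0 - X 1) q
    omega
  have T1 := J1.mulc 0.000125 (by norm_num) ((X 0 - X 1) * (1 - (X 0 - X 1))) (d2 _ ((totalDegree_sub _ _).trans (by simpa using hh)))
  have T2 := J2.mulc 0.000125 (by norm_num) ((X 0 - X 1) * (1 + (X 0 - X 1))) (d2 _ ((totalDegree_add _ _).trans (by simpa using hh)))
  have T3 := J3.mulc 0.000125 (by norm_num) ((X 0 - X 1) * 1) (d2 _ (by simp))
  have T4 := J3.mulc 0.000125 (by norm_num) ((X 0 - X 1) * (X 0 - X 1)) (d2 _ hh)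
  have T5 := K.mulc 0.125 (by norm_num) ((X 0 - X 1) * 1) (d2 _ (by simp))
  have T6 := K.mulc 0.125 (by norm_num) ((X 0 - X 1) * (X 0 - X 1)) (d2 _ hh)
  have T7 := I.mulc 0.37475 (by norm_num) ((X 0 - X 1) * 1) (d2 _ (by simp))
  have A := (((((T1.add T2).add T3).add T4).add T5).add T6).add T7
  have A' := A.pad (n' := 7 * ((m+1) + (m+1))) (by omega)
  · convert A' using 1
    ext x y
    simp only [map_mul, map_sub, map_add, eval_X, map_one, Matrix.cons_val_zero, Matrix.cons_val_one]
    have ii : ∀ f : ℝ → ℝ, Continuous f → IntervalIntegrable f MeasureTheory.volume 0 1 :=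
      fun f hf => hf.intervalIntegrable 0 1
    have e2 : (∫ t in (0:ℝ)..1, (1 - t) * (pp k l - Polynomial.derivative (pp k l)).eval (x - t * (x - y)))
        = (∫ t in (0:ℝ)..1, (1 - t) * (pp k l).eval (x - t * (x - y))) - ∫ t in (0:ℝ)..1, (1 - t) * (Polynomial.derivative (pp k l)).eval (x - t * (x - y)) := by
      rw [← intervalIntegral.integral_sub (ii _ (by fun_prop)) (ii _ (by fun_prop))]
      congr 1; ext t; simp; ring
    have e3 : (∫ t in (0:ℝ)..1, (1 - t) * (Polynomial.C 998 * pp k l + Polynomial.derivative (pp k l)).eval (x - t * (x - y)))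
        = 998 * (∫ t in (0:ℝ)..1, (1 - t) * (pp k l).eval (x - t * (x - y))) + ∫ t in (0:ℝ)..1, (1 - t) * (Polynomial.derivative (pp k l)).eval (x - t * (x - y)) := by
      rw [← intervalIntegral.integral_const_mul, ← intervalIntegral.integral_add (ii _ (by fun_prop)) (ii _ (by fun_prop))]
      congr 1; ext t; simp; ring
    have e4 : (∫ t in (0:ℝ)..1, t * (pp k l).eval (x - t * (x - y)))
        = (∫ t in (0:ℝ)..1, (pp k l).eval (x - t * (x - y))) - ∫ t in (0:ℝ)..1, (1 - t) * (pp k l).eval (x - t * (x - y)) := by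
      rw [← intervalIntegral.integral_sub (ii _ (by fun_prop)) (ii _ (by fun_prop))]
      congr 1; ext t; ring
    have b := by_parts (pp k l) x y
    have q := q_diff (pp k l) x y
    rw [← q_sub] at q
    rw [tgt, ← pp_eval, e2, e3, e4, ← q]
    simp only [one_mul]
    generalize (∫ t in (0:ℝ)..1, (1 - t) * (Polynomial.derivative (pp k l)).eval (x - t * (x - y))) = J' at *
    generalize (∫ t in (0:ℝ)..1, (1 - t) * (pp k l).eval (x - t * (x - y))) = J at *
    generalize (∫ t in (0:ℝ)..1, (pp k l).eval (x - t * (x - y))) = I at *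
    linear_combination 0.00025 * (x-y)^2 * b

theorem q_mono_bound (k l : ℕ) (hk : 0 < k) (hl : 0 < l) (x y D : ℝ) (hy : 0 ≤ y) (hyx : y ≤ x)
    (hx : x ≤ D) : 0 ≤ qkl k l x - qkl k l y ∧ qkl k l x - qkl k l y ≤ Real.exp D := by
  rw [q_sub]
  have hf := pp_facts k l hk hl
  constructor
  · exact intervalIntegral.integral_nonneg hyx fun z _ => (hf z).1
  · have h1 : ∫ z in y..x, (pp k l).eval z ≤ ∫ z in y..x, Real.exp z := by
      apply intervalIntegral.integral_mono_on hyx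
      · apply Continuous.intervalIntegrable; fun_prop
      · apply Continuous.intervalIntegrable; fun_prop
      · intro z hz
        exact pp_le_exp k l hk z (hy.trans hz.1)
    rw [integral_exp] at h1
    have := Real.exp_pos y
    have := Real.exp_le_exp.2 hx
    linarith

theorem half_bound (h q D E : ℝ) (h0 : 0 ≤ h) (hD : h ≤ D) (q0 : 0 ≤ q) (hq : q ≤ E) :
    0.5 * h * (1 + 0.25 * h ^ 2) * q ≤ D / 2 * (1 + D ^ 2 / 4) * E := by
  have h1 : h ^ 2 ≤ D ^ 2 := by gcongr
  have hD0 : 0 ≤ D := h0.trans hD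
  apply mul_le_mul _ hq q0 (by positivity)
  apply mul_le_mul (by linarith) (by linarith) (by positivity) (by positivity)

theorem tgt_bound (k l : ℕ) (hk : 0 < k) (hl : 0 < l) (x y D : ℝ) (hx : 0 ≤ x) (hy : 0 ≤ y)
    (hxD : x ≤ D) (hyD : y ≤ D) : tgt k l x y ≤ D / 2 * (1 + D ^ 2 / 4) * Real.exp D := by
  have hp : 0 ≤ pkl k l x := by rw [← pp_eval]; exact (pp_facts k l hk hl x).1
  have h1 : tgt k l x y ≤ 0.5 * (x - y) * (1 + 0.25 * (x - y) ^ 2) * (qkl k l x - qkl k l y) := by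
    rw [tgt]
    have : 0 ≤ 0.00025 * (x - y) ^ 2 * pkl k l x := by positivity
    linarith
  refine h1.trans ?_
  rcases le_total y x with h | h
  · obtain ⟨a, b⟩ := q_mono_bound k l hk hl x y D hy h hxD
    exact half_bound _ _ _ _ (by linarith) (by linarith) a b
  · obtain ⟨a, b⟩ := q_mono_bound k l hk hl y x D hx h hyD
    have := half_bound (y - x) _ D _ (by linarith) (by linarith) a b
    refine le_trans (le_of_eq ?_) this
    ring

theorem num_a (n : ℕ) : ((n:ℝ)+3) / 2 * (1 + ((n:ℝ)+3) ^ 2 / 4) ≤ 5 * 4 ^ n := by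
  induction n with
  | zero => norm_num
  | succ n ih =>
    have e : (4:ℝ) ^ (n+1) = 4 * 4 ^ n := by ring
    rw [e]
    push_cast
    have : (0:ℝ) ≤ n := Nat.cast_nonneg n
    have h2 : 0 ≤ (n:ℝ)^2 := by positivity
    have h3 : 0 ≤ (n:ℝ)^3 := by positivity
    nlinarith

theorem num_b (n : ℕ) : (((n+3 : ℕ):ℝ)+1) * 4 ^ (n+3+1) / 3 ≤ 7 ^ (n+3) := by
  induction n with
  | zero => norm_num
  | succ n ih =>
    have e1 : (4:ℝ) ^ (n+1+3+1) = 4 * 4 ^ (n+3+1) := by ring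
    have e2 : (7:ℝ) ^ (n+1+3) = 7 * 7 ^ (n+3) := by ring
    rw [e1, e2]
    have h4 : (0:ℝ) < 4 ^ (n+3+1) := by positivity
    push_cast at *
    have : (0:ℝ) ≤ n := Nat.cast_nonneg n
    nlinarith

theorem num_c (n : ℕ) : 5 * (4:ℝ) ^ n * (533:ℝ) ^ (n+3) ≤ 40000 ^ (n+2) := by
  induction n with
  | zero => norm_num
  | succ n ih =>
    have e : 5 * (4:ℝ) ^ (n+1) * (533:ℝ) ^ (n+1+3) = (4 * 533) * (5 * (4:ℝ) ^ n * (533:ℝ) ^ (n+3)) := by ring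
    have e2 : (40000:ℝ) ^ (n+1+2) = 40000 * 40000 ^ (n+2) := by ring
    rw [e, e2]
    apply mul_le_mul (by norm_num) ih (by positivity) (by norm_num)

theorem num_d (n : ℕ) :
    Real.sqrt (((n+3 : ℕ):ℝ) / 2 * (1 + ((n+3 : ℕ):ℝ) ^ 2 / 4) * Real.exp ((n+3 : ℕ):ℝ)) * 14 ^ (n+3)
      ≤ 200 ^ (n+2) := by
  rw [← le_div_iff₀ (by positivity)]
  apply Real.sqrt_le_iff.2 ⟨by positivity, ?_⟩
  rw [div_pow, le_div_iff₀ (by positivity), ← pow_mul, ← pow_mul, mul_comm (n+3), mul_comm (n+2),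
    pow_mul, pow_mul]
  have he : Real.exp ((n+3 : ℕ):ℝ) ≤ 2.7183 ^ (n+3) := by
    have := Real.exp_one_lt_d9
    rw [← mul_one ((n+3 : ℕ):ℝ), Real.exp_nat_mul]
    gcongr
    linarith
  have ha := num_a n
  have hc := num_c n
  push_cast at *
  calc _ ≤ (5 * 4 ^ n) * (2.7183 : ℝ) ^ (n+3) * (14 ^ 2) ^ (n+3) := by gcongr
    _ = (5 * 4 ^ n) * (2.7183 * 14 ^ 2 : ℝ) ^ (n+3) := by rw [mul_pow]; ring
    _ ≤ (5 * 4 ^ n) * (533 : ℝ) ^ (n+3) := by gcongr; norm_num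
    _ ≤ 40000 ^ (n+2) := hc
    _ = _ := by norm_num

theorem fact_bound (a b : ℕ) : ((a+b).factorial : ℝ) ≤ 2 ^ (a+b) * (a.factorial * b.factorial) := by
  have h := Nat.add_choose_mul_factorial_mul_factorial a b
  have h2 := Nat.choose_le_two_pow (a+b) b
  have : (a+b).factorial ≤ 2 ^ (a+b) * (a.factorial * b.factorial) := by
    rw [← h, mul_assoc]
    exact Nat.mul_le_mul_right _ h2
  exact_mod_cast this

theorem num_e (N : ℕ) (hN : 2 ≤ N) : 14 * N ≤ 10 ^ N := by
  induction N, hN using Nat.le_induction with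
  | base => norm_num
  | succ n hn ih => rw [pow_succ]; omega

theorem monDeg2 (μ : Fin 2 →₀ ℕ) : monomialDeg μ = μ 0 + μ 1 := by
  rw [monomialDeg, Finsupp.sum_fintype _ _ (by simp)]
  simp

open MvPolynomial in
theorem g_bounded (k l : ℕ) (hk : 0 < k) (hl : 0 < l) (n : ℕ) (g : MvPolynomial (Fin 2) ℝ)
    (hN : 2 ^ k * l = n + 2) (hg : g.totalDegree ≤ n + 3)
    (hle : ∀ x y, (eval ![x, y] g) ^ 2 ≤ tgt k l x y) :
    MvBounded (2 ^ k * l + 10) ((200:ℝ) ^ (2 ^ k * l)) g := by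
  rw [hN]
  refine ⟨by omega, fun μ _ => ?_⟩
  rw [monDeg2]
  have hfp : (0:ℝ) < ((μ 0 + μ 1).factorial : ℝ) := by exact_mod_cast Nat.factorial_pos _
  by_cases hd : n + 3 < μ 0 + μ 1
  · rw [coeff_eq_zero_of_totalDegree_lt, abs_zero]
    · positivity
    · have := monDeg2 μ
      rw [monomialDeg, Finsupp.sum] at this
      omega
  · rw [le_div_iff₀ hfp]
    set M := Real.sqrt (((n+3 : ℕ):ℝ) / 2 * (1 + ((n+3 : ℕ):ℝ) ^ 2 / 4) * Real.exp ((n+3 : ℕ):ℝ)) with hM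
    have hM0 : 0 ≤ M := Real.sqrt_nonneg _
    have hc := coeff_bound (n+3) g hg M (by
      intro a b hab
      apply Real.abs_le_sqrt
      refine (hle _ _).trans (tgt_bound k l hk hl _ _ _ (by positivity) (by positivity) ?_ ?_)
      · exact_mod_cast (by omega : a ≤ n + 3)
      · exact_mod_cast (by omega : b ≤ n + 3)) μ
    calc |coeff μ g| * ((μ 0 + μ 1).factorial : ℝ)
        ≤ |coeff μ g| * (2 ^ (μ 0 + μ 1) * ((μ 0).factorial * (μ 1).factorial)) := by
          gcongr; exact fact_bound _ _
      _ = 2 ^ (μ 0 + μ 1) * (((μ 0).factorial : ℝ) * (μ 1).factorial * |coeff μ g|) := by ring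
      _ ≤ 2 ^ (n+3) * (M * 7 ^ (n+3)) := by
          apply mul_le_mul _ (hc.trans (mul_le_mul_of_nonneg_left (num_b n) hM0)) (by positivity) (by positivity)
          apply pow_le_pow_right₀ (by norm_num); omega
      _ = M * 14 ^ (n+3) := by
          rw [show (14:ℝ) = 2 * 7 by norm_num, mul_pow]; ring
      _ ≤ _ := num_d n

theorem monotone_flat_approx_sos (k ℓ : ℕ) (hk : 0 < k) (hℓ : 0 < ℓ) :
    ∃ F : MvPolynomial (Fin 2) ℝ,
      (∀ x y : ℝ, MvPolynomial.eval ![x, y] F =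
        0.5 * (x - y) * (1 + 0.25 * (x - y) ^ 2) * (qkl k ℓ x - qkl k ℓ y)
          - 0.00025 * (x - y) ^ 2 * pkl k ℓ x) ∧
      MvSoSBounded (10 ^ (2 ^ k * ℓ)) (2 ^ k * ℓ + 10) ((200 : ℝ) ^ (2 ^ k * ℓ)) F := by
  obtain ⟨m, hm, hd⟩ := pp_natDegree k ℓ hℓ
  have hN2 : 2 ≤ 2 ^ k * ℓ := by
    have h1 : 2 ^ 1 ≤ 2 ^ k := Nat.pow_le_pow_right (by norm_num) hk
    nlinarith
  obtain ⟨n, hn⟩ := Nat.exists_eq_add_of_le' hN2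
  have h14 := num_e _ hN2
  obtain ⟨g, hg, e⟩ := (tgt_SS k ℓ m hk hℓ hd).pad (n' := 10 ^ (2 ^ k * ℓ)) (by omega)
  refine ⟨∑ i, (g i) ^ 2, ?_, g, fun i => ?_, rfl⟩
  · intro x y
    rw [map_sum]
    simp only [map_pow]
    exact (e x y).symm
  · refine g_bounded k ℓ hk hℓ n (g i) hn ((hg i).trans (by omega)) fun x y => ?_
    rw [e]
    exact Finset.single_le_sum (f := fun i => (MvPolynomial.eval ![x, y] (g i)) ^ 2)
      (fun i _ => sq_nonneg _) (Finset.mem_univ i)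
end

section
/- For every integer ℓ ≥ 1 and every real number x, |s_{2ℓ−1}(x)| < 99·s_{2ℓ}(x). -/
open scoped BigOperators

theorem taylorExp_succ (m : ℕ) (x : ℝ) :
    taylorExp (m + 1) x = taylorExp m x + x ^ (m + 1) / (Nat.factorial (m + 1) : ℝ) := by
  unfold taylorExp
  rw [Finset.sum_range_succ]

theorem hasDerivAt_taylorExp (m : ℕ) (x : ℝ) :
    HasDerivAt (taylorExp (m + 1)) (taylorExp m x) x := by
  induction m with
  | zero =>
    have h : taylorExp (0 + 1) = fun x => 1 + x := by
      funext y
      simp [taylorExp, Finset.sum_range_succ]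
    rw [h]
    simpa [taylorExp] using (hasDerivAt_id x).const_add 1
  | succ m ih =>
    have h : taylorExp (m + 1 + 1) = fun x => taylorExp (m + 1) x
        + x ^ (m + 1 + 1) / (Nat.factorial (m + 1 + 1) : ℝ) := by
      funext y
      exact taylorExp_succ _ _
    rw [h, taylorExp_succ m x]
    have h2 := (hasDerivAt_pow (m + 1 + 1) x).div_const (Nat.factorial (m + 1 + 1) : ℝ)
    refine (ih.add h2).congr_deriv ?_
    rw [Nat.factorial_succ (m + 1)]
    have : (Nat.factorial (m + 1) : ℝ) ≠ 0 := by positivity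
    push_cast
    have h3 : (m : ℝ) + 1 + 1 ≠ 0 := by positivity
    try simp only [Nat.add_sub_cancel]
    field_simp

theorem hasDerivAt_aux (m : ℕ) (hm : Even (m + 1)) (a b y : ℝ) :
    HasDerivAt (fun y => Real.exp y * (a * taylorExp (m + 1) (-y)
        - b * (y ^ (m + 1) / (Nat.factorial (m + 1) : ℝ))))
      (Real.exp y * (y ^ m / (Nat.factorial (m + 1) : ℝ)) * ((a - b) * y - b * (m + 1))) y := by
  have h1 : HasDerivAt (fun y => taylorExp (m + 1) (-y)) (taylorExp m (-y) * (-1)) y :=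
    (hasDerivAt_taylorExp m (-y)).comp y (hasDerivAt_neg y)
  have h2 := (hasDerivAt_pow (m + 1) y).div_const (Nat.factorial (m + 1) : ℝ)
  refine ((Real.hasDerivAt_exp y).mul ((h1.const_mul a).sub (h2.const_mul b))).congr_deriv ?_
  try simp only [Pi.sub_apply]
  rw [taylorExp_succ, hm.neg_pow]
  push_cast
  try simp only [Nat.add_sub_cancel]
  ring

theorem exp_mul_taylorExp_ge (m : ℕ) (hm : Even (m + 1)) (y : ℝ) (hy : 0 ≤ y) :
    1 ≤ Real.exp y * taylorExp (m + 1) (-y) := by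
  have hmono : MonotoneOn (fun y => Real.exp y * (1 * taylorExp (m + 1) (-y)
        - 0 * (y ^ (m + 1) / (Nat.factorial (m + 1) : ℝ)))) (Set.Ici 0) := by
    apply monotoneOn_of_hasDerivWithinAt_nonneg (convex_Ici 0)
    · exact fun z _ => (hasDerivAt_aux m hm 1 0 z).continuousAt.continuousWithinAt
    · exact fun z _ => (hasDerivAt_aux m hm 1 0 z).hasDerivWithinAt
    · intro z hz
      rw [interior_Ici] at hz
      have hz' : 0 < z := hz
      have : (1 - 0) * z - 0 * ((m : ℝ) + 1) = z := by ring
      rw [this]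
      positivity
  have h := hmono (Set.mem_Ici.2 le_rfl) (Set.mem_Ici.2 hy) hy
  have h0 : taylorExp (m + 1) 0 = 1 := by
    unfold taylorExp
    rw [Finset.sum_range_succ']
    simp
  simpa [h0] using h

theorem small_case (m : ℕ) (hm : Even (m + 1)) (y : ℝ) (hy : 0 ≤ y) (hy2 : 99 * y ≤ m + 1) :
    0 < Real.exp y * (100 * taylorExp (m + 1) (-y)
        - 1 * (y ^ (m + 1) / (Nat.factorial (m + 1) : ℝ))) := by
  have h1 := exp_mul_taylorExp_ge m hm y hy
  have h2 : (99 * y) ^ (m + 1) / (Nat.factorial (m + 1) : ℝ) ≤ Real.exp (m + 1) := by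
    refine le_trans ?_ (Real.pow_div_factorial_le_exp ((m : ℝ) + 1) (by positivity) (m + 1))
    gcongr
  have h3 : Real.exp y ≤ Real.exp (m + 1) := Real.exp_le_exp.2 (by linarith)
  have h4 : Real.exp ((m : ℝ) + 1) = Real.exp 1 ^ (m + 1) := by
    rw [← Real.exp_nat_mul]
    push_cast
    ring_nf
  have h5 : Real.exp 1 ^ (m + 1) * Real.exp 1 ^ (m + 1) ≤ 99 ^ (m + 1) := by
    rw [← mul_pow]
    have := Real.exp_one_lt_d9
    have h0 := Real.exp_pos 1
    gcongr
    nlinarith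
  rw [h4] at h2 h3
  rw [mul_pow, mul_div_assoc] at h2
  set T := y ^ (m + 1) / (Nat.factorial (m + 1) : ℝ) with hT
  have hT0 : 0 ≤ T := by positivity
  have hP : (0 : ℝ) < 99 ^ (m + 1) := by positivity
  have h6 : 99 ^ (m + 1) * (Real.exp y * T) ≤ 99 ^ (m + 1) * 1 := by
    calc 99 ^ (m + 1) * (Real.exp y * T) = Real.exp y * (99 ^ (m + 1) * T) := by ring
      _ ≤ Real.exp 1 ^ (m + 1) * Real.exp 1 ^ (m + 1) := by gcongr
      _ ≤ _ := by rw [mul_one]; exact h5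
  have h7 := le_of_mul_le_mul_left h6 hP
  linarith

theorem all_case (m : ℕ) (hm : Even (m + 1)) (y : ℝ) (hy : 0 ≤ y) :
    0 < Real.exp y * (100 * taylorExp (m + 1) (-y)
        - 1 * (y ^ (m + 1) / (Nat.factorial (m + 1) : ℝ))) := by
  rcases le_total (99 * y) (m + 1) with h | h
  · exact small_case m hm y hy h
  have hc : (0 : ℝ) < ((m : ℝ) + 1) / 99 := by positivity
  have hmono : MonotoneOn (fun y => Real.exp y * (100 * taylorExp (m + 1) (-y)
        - 1 * (y ^ (m + 1) / (Nat.factorial (m + 1) : ℝ)))) (Set.Ici (((m : ℝ) + 1) / 99)) := by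
    apply monotoneOn_of_hasDerivWithinAt_nonneg (convex_Ici _)
    · exact fun z _ => (hasDerivAt_aux m hm 100 1 z).continuousAt.continuousWithinAt
    · exact fun z _ => (hasDerivAt_aux m hm 100 1 z).hasDerivWithinAt
    · intro z hz
      rw [interior_Ici] at hz
      have hz' : ((m : ℝ) + 1) / 99 < z := hz
      have hz0 : 0 < z := hc.trans hz'
      apply mul_nonneg
      · positivity
      · linarith
  have hcy : ((m : ℝ) + 1) / 99 ≤ y := by linarith
  exact lt_of_lt_of_le (small_case m hm _ hc.le (by linarith))
    (hmono (Set.mem_Ici.2 le_rfl) (Set.mem_Ici.2 hcy) hcy)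

/-- **Odd truncations are dominated by even truncations** (Lemma B.1): for every
integer `ℓ ≥ 1` and every real `x`, `|s_{2ℓ-1}(x)| < 99 s_{2ℓ}(x)`. -/
theorem odd_truncation_lt_even (ℓ : ℕ) (hℓ : 1 ≤ ℓ) (x : ℝ) :
    |taylorExp (2 * ℓ - 1) x| < 99 * taylorExp (2 * ℓ) x := by
  obtain ⟨m, hm⟩ : ∃ m, 2 * ℓ = m + 1 := ⟨2 * ℓ - 1, by omega⟩
  have hev : Even (m + 1) := hm ▸ even_two_mul ℓ
  have hT : 0 ≤ x ^ (m + 1) / (Nat.factorial (m + 1) : ℝ) :=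
    div_nonneg (hev.pow_nonneg x) (by positivity)
  have key : x ^ (m + 1) / (Nat.factorial (m + 1) : ℝ) < 100 * taylorExp (m + 1) x
      ∧ 0 < taylorExp (m + 1) x := by
    rcases le_total 0 x with hx | hx
    · have h0 : 0 < taylorExp m x := by
        unfold taylorExp
        rw [Finset.sum_range_succ']
        simp only [pow_zero, Nat.factorial_zero, Nat.cast_one, div_one]
        positivity
      rw [taylorExp_succ]
      constructor <;> linarith
    · have h := pos_of_mul_pos_right (all_case m hev (-x) (by linarith)) (Real.exp_pos _).le
      rw [neg_neg, hev.neg_pow] at h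
      constructor <;> linarith
  rw [hm, Nat.add_sub_cancel]
  have hs := taylorExp_succ m x
  rw [abs_lt]
  constructor <;> linarith [key.1, key.2]
end

section
/- Let ℓ be a positive integer and let c be a real number with −0.01 ≤ c ≤ 0.01. Then the polynomial s_{2ℓ}(x) + c·s_{2ℓ−1}(x) is a (2^ℓ, ℓ, 10^ℓ)-bounded sum-of-squares polynomial in x. -/
open scoped BigOperators

/-- The degree-`ℓ` truncation of the Taylor series of `e^x`, as a real polynomial:
`sPoly ℓ = ∑_{k=0}^{ℓ} x^k/k!`. -/
noncomputable def sPoly (ℓ : ℕ) : Polynomial ℝ :=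
  ∑ k ∈ Finset.range (ℓ + 1), Polynomial.C (1 / (Nat.factorial k : ℝ)) * Polynomial.X ^ k

/-- A univariate real polynomial is `(d, C)`-bounded if it has degree at most `d` and,
for every `d' ≤ d`, the coefficient of `x^{d'}` has magnitude at most `C/d'!`. -/
def UniBounded (d : ℕ) (C : ℝ) (f : Polynomial ℝ) : Prop :=
  f.natDegree ≤ d ∧ ∀ n ≤ d, |f.coeff n| ≤ C / (Nat.factorial n : ℝ)

/-- A univariate real polynomial is a `(k, d, C)`-bounded sum-of-squares polynomial if
it can be written as `q₁² + ⋯ + q_k²` with each `qᵢ` a `(d, C)`-bounded polynomial. -/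
def UniSoSBounded (k d : ℕ) (C : ℝ) (f : Polynomial ℝ) : Prop :=
  ∃ g : Fin k → Polynomial ℝ, (∀ i, UniBounded d C (g i)) ∧ f = ∑ i, (g i) ^ 2

namespace TruncSOS
open Polynomial

/-- truncated exponential as a function -/
noncomputable def S (m : ℕ) (x : ℝ) : ℝ := ∑ k ∈ Finset.range (m + 1), x ^ k / (Nat.factorial k : ℝ)

lemma S_succ (m : ℕ) (x : ℝ) : S (m + 1) x = S m x + x ^ (m + 1) / (Nat.factorial (m + 1) : ℝ) := by
  unfold S; rw [Finset.sum_range_succ]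

lemma S_zero (m : ℕ) : S m 0 = 1 := by
  unfold S; rw [Finset.sum_range_succ']; simp

lemma hasDerivAt_term (m : ℕ) (x : ℝ) :
    HasDerivAt (fun x : ℝ => x ^ (m + 1) / (Nat.factorial (m + 1) : ℝ))
      (x ^ m / (Nat.factorial m : ℝ)) x := by
  have h := (hasDerivAt_pow (m + 1) x).div_const (Nat.factorial (m + 1) : ℝ)
  refine h.congr_deriv ?_
  rw [Nat.factorial_succ]
  have : (Nat.factorial m : ℝ) ≠ 0 := by positivity
  push_cast
  have : (m : ℝ) + 1 ≠ 0 := by positivity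
  field_simp

lemma hasDerivAt_S (m : ℕ) (x : ℝ) :
    HasDerivAt (S m) (S m x - x ^ m / (Nat.factorial m : ℝ)) x := by
  induction m with
  | zero =>
    have : S 0 = fun _ => 1 := by funext y; simp [S]
    rw [this]; simpa using hasDerivAt_const x (1 : ℝ)
  | succ m ih =>
    have h := ih.add (hasDerivAt_term m x)
    have e : S (m + 1) = S m + fun x : ℝ => x ^ (m + 1) / (Nat.factorial (m + 1) : ℝ) := by
      funext y; simp [S_succ]
    rw [e]
    refine h.congr_deriv ?_
    rw [Pi.add_apply]; ring

lemma hasDerivAt_exp_mul (F : ℝ → ℝ) (F' x : ℝ) (h : HasDerivAt F F' x) :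
    HasDerivAt (fun x => Real.exp (-x) * F x) (Real.exp (-x) * (F' - F x)) x := by
  have h1 : HasDerivAt (fun x : ℝ => Real.exp (-x)) (Real.exp (-x) * (-1)) x :=
    (hasDerivAt_neg x).exp
  refine (h1.mul h).congr_deriv ?_
  ring

lemma anti_of (F F' : ℝ → ℝ) (a : ℝ) (h : ∀ x, HasDerivAt F (F' x) x)
    (hle : ∀ x < a, F' x ≤ F x) (x : ℝ) (hx : x ≤ a) :
    Real.exp (-a) * F a ≤ Real.exp (-x) * F x := by
  have hd := fun x => hasDerivAt_exp_mul F (F' x) x (h x)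
  have : AntitoneOn (fun x => Real.exp (-x) * F x) (Set.Iic a) := by
    apply antitoneOn_of_deriv_nonpos (convex_Iic a)
    · exact fun x _ => (hd x).continuousAt.continuousWithinAt
    · exact fun x _ => (hd x).differentiableAt.differentiableWithinAt
    · intro x hx
      rw [interior_Iic] at hx
      rw [(hd x).deriv]
      have := hle x hx
      exact mul_nonpos_of_nonneg_of_nonpos (Real.exp_pos _).le (by linarith)
  exact this (Set.mem_Iic.2 hx) (Set.mem_Iic.2 le_rfl) hx

lemma exp_le_S (n : ℕ) (hn : Even n) (x : ℝ) (hx : x ≤ 0) : Real.exp x ≤ S n x := by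
  have h := anti_of (S n) _ 0 (hasDerivAt_S n) (fun x _ => by
    have : 0 ≤ x ^ n / (Nat.factorial n : ℝ) := div_nonneg (hn.pow_nonneg x) (by positivity)
    linarith) x hx
  rw [S_zero] at h
  simp only [neg_zero, Real.exp_zero, mul_one] at h
  rw [Real.exp_neg] at h
  have := Real.exp_pos x
  calc Real.exp x = Real.exp x * 1 := by ring
    _ ≤ Real.exp x * ((Real.exp x)⁻¹ * S n x) := by gcongr
    _ = S n x := by field_simp

lemma small_bound (n : ℕ) (hn : 0 < n) (c : ℝ) (hc : 0 ≤ c) (hc2 : c ≤ 0.01) (y : ℝ) (hy : 0 ≤ y)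
    (hyc : y ≤ c * n) : y ^ n / (Nat.factorial n : ℝ) ≤ Real.exp (-y) := by
  have hny : (0:ℝ) ≤ n := by positivity
  have hy2 : y ≤ 0.01 * n := hyc.trans (by gcongr)
  have h1 : (n : ℝ) ^ n / (Nat.factorial n : ℝ) ≤ Real.exp n := Real.pow_div_factorial_le_exp _ hny n
  have he := Real.exp_one_lt_d9
  have h3 : (0.01 : ℝ) * Real.exp 1 ≤ 0.1 := by linarith
  have h4 : (0.1 : ℝ) ≤ Real.exp (-0.01) := by
    have := Real.add_one_le_exp (-0.01 : ℝ)
    linarith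
  calc y ^ n / (Nat.factorial n : ℝ) ≤ (0.01 * n) ^ n / (Nat.factorial n : ℝ) := by gcongr
    _ = 0.01 ^ n * ((n : ℝ) ^ n / (Nat.factorial n : ℝ)) := by rw [mul_pow]; ring
    _ ≤ 0.01 ^ n * Real.exp n := by gcongr
    _ = (0.01 * Real.exp 1) ^ n := by rw [mul_pow, ← Real.exp_nat_mul]; simp
    _ ≤ (Real.exp (-0.01)) ^ n := by
        have := Real.exp_pos 1
        gcongr; linarith
    _ = Real.exp (-(0.01 * n)) := by rw [← Real.exp_nat_mul]; ring_nf
    _ ≤ Real.exp (-y) := by gcongr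

lemma F_pos (m : ℕ) (hm : Odd m) (c : ℝ) (hc1 : -0.01 ≤ c) (hc2 : c ≤ 0.01) (x : ℝ) :
    0 < S (m + 1) x + c * S m x := by
  have hev : Even (m + 1) := hm.add_one
  have hT : ∀ x : ℝ, 0 ≤ x ^ (m + 1) / (Nat.factorial (m + 1) : ℝ) := fun x =>
    div_nonneg (hev.pow_nonneg x) (by positivity)
  have key : ∀ x, S (m + 1) x + c * S m x
      = (1 + c) * S (m + 1) x - c * (x ^ (m + 1) / (Nat.factorial (m + 1) : ℝ)) := by
    intro x; rw [S_succ]; ring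
  rcases le_or_gt 0 x with hx | hx
  · have hSm : 0 < S m x := by
      unfold S
      rw [Finset.sum_range_succ']
      have : 0 ≤ ∑ k ∈ Finset.range m, x ^ (k + 1) / (Nat.factorial (k + 1) : ℝ) :=
        Finset.sum_nonneg fun i _ => by positivity
      simp
      linarith
    rw [S_succ]
    nlinarith [hT x]
  have hE := exp_le_S (m + 1) hev x hx.le
  have hexp := Real.exp_pos x
  rcases le_or_gt c 0 with hc | hc
  · rw [key]
    nlinarith [hT x, mul_nonneg (neg_nonneg.2 hc) (hT x)]
  have small : ∀ x : ℝ, x ≤ 0 → -(c * (m + 1 : ℕ)) ≤ x → 0 < S (m + 1) x + c * S m x := by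
    intro x hx hxc
    have h := small_bound (m + 1) (by omega) c hc.le hc2 (-x) (by linarith) (by linarith)
    rw [hev.neg_pow, neg_neg] at h
    have hE := exp_le_S (m + 1) hev x hx
    have hexp := Real.exp_pos x
    rw [key]
    nlinarith
  rcases le_or_gt (-(c * (m + 1 : ℕ))) x with hxc | hxc
  · exact small x hx.le hxc
  have h0 := small (-(c * (m + 1 : ℕ))) (by
    have : 0 ≤ c * (m + 1 : ℕ) := by positivity
    linarith) le_rfl
  have h := anti_of (fun x => S (m + 1) x + c * S m x) _ (-(c * (m + 1 : ℕ)))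
    (fun x => (hasDerivAt_S (m + 1) x).add ((hasDerivAt_S m x).const_mul c)) (by
      intro x hx
      have hn : (0:ℝ) < (m + 1 : ℕ) := by positivity
      have hx0 : x ≤ 0 := hx.le.trans (by
        have : 0 ≤ c * (m + 1 : ℕ) := by positivity
        linarith)
      have e : x ^ (m + 1) / (Nat.factorial (m + 1) : ℝ) =
          (x / (m + 1 : ℕ)) * (x ^ m / (Nat.factorial m : ℝ)) := by
        rw [Nat.factorial_succ, pow_succ]; push_cast
        field_simp
      have h1 : x / (m + 1 : ℕ) ≤ -c := by rw [div_le_iff₀ hn]; linarith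
      have h2 : x ^ m / (Nat.factorial m : ℝ) ≤ 0 :=
        div_nonpos_of_nonpos_of_nonneg (hm.pow_nonpos hx0) (by positivity)
      rw [e]
      nlinarith) x hxc.le
  have h5 := lt_of_lt_of_le (mul_pos (Real.exp_pos _) h0) h
  exact pos_of_mul_pos_right h5 (Real.exp_pos _).le

lemma sos_two (N : ℕ) : ∀ f : ℝ[X], f.natDegree ≤ N → (∀ x, 0 < f.eval x) →
    ∃ p q : ℝ[X], f = p ^ 2 + q ^ 2 ∧ 2 * p.natDegree ≤ f.natDegree ∧
      2 * q.natDegree ≤ f.natDegree := by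
  induction N using Nat.strong_induction_on with
  | _ N ih =>
  intro f hN hf
  by_cases hd : f.natDegree = 0
  · rw [natDegree_eq_zero] at hd
    obtain ⟨a, rfl⟩ := hd
    have ha := hf 0
    simp only [eval_C] at ha
    refine ⟨C (Real.sqrt a), 0, ?_, by simp, by simp⟩
    rw [← C_pow, Real.sq_sqrt ha.le]; simp
  have hf0 : f ≠ 0 := by rintro rfl; simp at hd
  obtain ⟨z, hz⟩ := IsAlgClosed.exists_aeval_eq_zero ℂ f (by
    intro h; exact hd (natDegree_eq_of_degree_eq_some h))
  have him : z.im ≠ 0 := by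
    intro h
    have hz' : z = algebraMap ℝ ℂ z.re := by apply Complex.ext <;> simp [h]
    rw [hz', aeval_algebraMap_apply] at hz
    have h3 := hf z.re
    simp at hz
    linarith
  obtain ⟨g, hg⟩ := f.quadratic_dvd_of_aeval_eq_zero_im_ne_zero hz him
  have hQ : (X ^ 2 - C (2 * z.re) * X + C (‖z‖ ^ 2) : ℝ[X]) = (X - C z.re) ^ 2 + C z.im ^ 2 := by
    rw [Complex.sq_norm, Complex.normSq_apply]
    simp only [C_add, C_mul, C_ofNat]
    ring
  rw [hQ] at hg
  have hQd : ((X - C z.re) ^ 2 + C z.im ^ 2 : ℝ[X]).natDegree = 2 := by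
    rw [← C_pow, natDegree_add_C, natDegree_pow, natDegree_X_sub_C]
  have hg0 : g ≠ 0 := by rintro rfl; simp at hg; exact hf0 hg
  have hQ0 : ((X - C z.re) ^ 2 + C z.im ^ 2 : ℝ[X]) ≠ 0 := by
    intro h; rw [h] at hQd; simp at hQd
  have hdeg : f.natDegree = 2 + g.natDegree := by
    rw [hg, natDegree_mul hQ0 hg0, hQd]
  have hgpos : ∀ x, 0 < g.eval x := by
    intro x
    have h1 := hf x
    rw [hg, eval_mul] at h1
    refine pos_of_mul_pos_right h1 ?_
    simp; positivity
  obtain ⟨p, q, hpq, hp, hq⟩ := ih g.natDegree (by omega) g le_rfl hgpos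
  have hdX : ∀ r : ℝ[X], ((X - C z.re) * r).natDegree ≤ 1 + r.natDegree := fun r =>
    natDegree_mul_le.trans (by rw [natDegree_X_sub_C])
  refine ⟨(X - C z.re) * p - C z.im * q, (X - C z.re) * q + C z.im * p, ?_, ?_, ?_⟩
  · rw [hg, hpq]; ring
  · have h1 := natDegree_sub_le ((X - C z.re) * p) (C z.im * q)
    have h2 := hdX p
    have h3 := natDegree_C_mul_le z.im q
    have := max_le_iff.1 (le_refl (max ((X - C z.re) * p).natDegree (C z.im * q).natDegree))
    rw [le_max_iff] at h1
    omega
  · have h1 := natDegree_add_le ((X - C z.re) * q) (C z.im * p)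
    have h2 := hdX q
    have h3 := natDegree_C_mul_le z.im p
    rw [le_max_iff] at h1
    omega

/-- binomial polynomial `x choose k` -/
noncomputable def B : ℕ → ℝ[X]
  | 0 => 1
  | k + 1 => C (1 / ((k : ℝ) + 1)) * (B k * (X - C (k : ℝ)))

lemma B_eval (k n : ℕ) : (B k).eval (n : ℝ) = (n.choose k : ℝ) := by
  induction k with
  | zero => simp [B]
  | succ k ih =>
    simp only [B, eval_mul, eval_C, eval_sub, eval_X, ih]
    have h := Nat.choose_succ_right_eq n k
    have hk : (k : ℝ) + 1 ≠ 0 := by positivity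
    field_simp
    rcases le_or_gt k n with hkn | hkn
    · have h' : (n.choose (k + 1) : ℝ) * (k + 1) = n.choose k * ((n : ℝ) - k) := by
        rw [← Nat.cast_sub hkn]; exact_mod_cast h
      linarith
    · simp [Nat.choose_eq_zero_of_lt hkn, Nat.choose_eq_zero_of_lt (hkn.trans (Nat.lt_succ_self k))]

lemma B_coeff (k : ℕ) : ∀ n, (Nat.factorial n : ℝ) * |(B k).coeff n| ≤ (k.choose n : ℝ) := by
  induction k with
  | zero =>
    intro n
    rcases n with _ | n <;> simp [B, coeff_one]
  | succ k ih =>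
    intro n
    have hk : (0 : ℝ) < (k : ℝ) + 1 := by positivity
    have hkk : (k : ℝ) ≤ k + 1 := by linarith
    rw [B, coeff_C_mul, mul_sub, coeff_sub, coeff_mul_C, abs_mul, abs_of_pos (by positivity)]
    rcases n with _ | n
    · have h := ih 0
      simp at h
      simp only [mul_coeff_zero, coeff_X_zero]
      simp only [Nat.factorial_zero, Nat.cast_one, mul_zero, zero_sub, abs_neg, abs_mul, Nat.abs_cast,
        Nat.choose_zero_right]
      have : |(B k).coeff 0| * k ≤ 1 * (k + 1) := by gcongr
      rw [one_mul, one_div, inv_mul_le_iff₀ hk]; linarith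
    · rw [coeff_mul_X]
      have h1 := ih n
      have h2 := ih (n + 1)
      rw [Nat.choose_succ_succ]; push_cast
      by_cases hn : n ≤ k
      · have hnk : (n : ℝ) ≤ k := by exact_mod_cast hn
        have habs : |(B k).coeff n - (B k).coeff (n + 1) * k| ≤
            |(B k).coeff n| + |(B k).coeff (n + 1)| * k := by
          refine (abs_sub _ _).trans ?_
          rw [abs_mul, Nat.abs_cast]
        have hfac : (Nat.factorial (n + 1) : ℝ) = (n + 1) * Nat.factorial n := by
          rw [Nat.factorial_succ]; push_cast; ring
        have e : (Nat.factorial (n + 1) : ℝ) * (1 / ((k : ℝ) + 1) *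
            |(B k).coeff n - (B k).coeff (n + 1) * k|) =
            (Nat.factorial (n + 1) : ℝ) * |(B k).coeff n - (B k).coeff (n + 1) * k| / (k + 1) := by
          ring
        rw [e, div_le_iff₀ hk]
        calc (Nat.factorial (n + 1) : ℝ) * |(B k).coeff n - (B k).coeff (n + 1) * k|
            ≤ (Nat.factorial (n + 1) : ℝ) * (|(B k).coeff n| + |(B k).coeff (n + 1)| * k) := by gcongr
          _ = (n + 1) * (Nat.factorial n * |(B k).coeff n|) +
              k * (Nat.factorial (n + 1) * |(B k).coeff (n + 1)|) := by rw [hfac]; ring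
          _ ≤ (k + 1) * (k.choose n) + (k + 1) * (k.choose (n + 1)) := by gcongr
          _ = _ := by ring
      · push Not at hn
        have c1 : k.choose n = 0 := Nat.choose_eq_zero_of_lt hn
        have c2 : k.choose (n + 1) = 0 := Nat.choose_eq_zero_of_lt (by omega)
        rw [c1] at h1
        rw [c2] at h2
        have z : ∀ j : ℕ, (Nat.factorial j : ℝ) * |(B k).coeff j| ≤ (0 : ℕ) → (B k).coeff j = 0 := by
          intro j hj
          have hp : (0:ℝ) < Nat.factorial j := by positivity
          have : |(B k).coeff j| ≤ 0 := by
            by_contra hcon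
            push Not at hcon
            have := mul_pos hp hcon
            simp at hj; linarith
          exact abs_nonpos_iff.1 this
        rw [z _ h1, z _ h2, c1, c2]; simp

lemma newton (q : ℝ[X]) (l : ℕ) (hq : q.natDegree ≤ l) :
    q = ∑ k ∈ Finset.range (l + 1), C ((fwdDiff (1:ℝ))^[k] q.eval 0) * B k := by
  apply Polynomial.eq_of_infinite_eval_eq
  apply Set.Infinite.mono (s := Set.range (fun n : ℕ => (n : ℝ)))
  · rintro _ ⟨n, rfl⟩
    simp only [Set.mem_ofPred_eq, eval_finsetSum, eval_mul, eval_C, B_eval]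
    have h := shift_eq_sum_fwdDiff_iter (1:ℝ) q.eval n 0
    simp only [zero_add, nsmul_eq_mul, mul_one] at h
    rw [h]
    have h1 : ∑ k ∈ Finset.range (n + 1), (n.choose k : ℝ) * (fwdDiff (1:ℝ))^[k] q.eval 0 =
      ∑ k ∈ Finset.range (n + l + 1), (n.choose k : ℝ) * (fwdDiff (1:ℝ))^[k] q.eval 0 := by
      apply Finset.sum_subset
      · intro i; simp; omega
      · intro i _ hi
        simp at hi
        rw [Nat.choose_eq_zero_of_lt (by omega)]; simp
    have h2 : ∑ k ∈ Finset.range (l + 1), (fwdDiff (1:ℝ))^[k] q.eval 0 * (n.choose k : ℝ) =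
      ∑ k ∈ Finset.range (n + l + 1), (fwdDiff (1:ℝ))^[k] q.eval 0 * (n.choose k : ℝ) := by
      apply Finset.sum_subset
      · intro i; simp; omega
      · intro i _ hi
        simp at hi
        rw [Polynomial.fwdDiff_iter_eq_zero_of_degree_lt (by omega)]; simp
    rw [h1, h2]
    exact Finset.sum_congr rfl fun i _ => mul_comm _ _
  · exact Set.infinite_range_of_injective Nat.cast_injective

lemma diff_bound (q : ℝ[X]) (M r : ℝ) (hq : ∀ j : ℕ, |q.eval (j : ℝ)| ≤ M * r ^ j) (k : ℕ) :
    |(fwdDiff (1:ℝ))^[k] q.eval 0| ≤ M * (r + 1) ^ k := by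
  rw [fwdDiff_iter_eq_sum_shift]
  refine (Finset.abs_sum_le_sum_abs _ _).trans ?_
  rw [add_pow, Finset.mul_sum]
  apply Finset.sum_le_sum
  intro i _
  simp only [zero_add, nsmul_eq_mul, mul_one, zsmul_eq_mul, abs_mul, one_pow]
  push_cast
  rw [abs_mul, abs_pow]
  simp only [abs_neg, abs_one, one_pow, one_mul, Nat.abs_cast]
  calc (k.choose i : ℝ) * |q.eval (i : ℝ)| ≤ k.choose i * (M * r ^ i) := by
        gcongr; exact hq i
    _ = _ := by ring

lemma geom_bound (l : ℕ) : 1.01 * ∑ k ∈ Finset.range (l + 1 + 1), (5.4 : ℝ) ^ k ≤ 10 ^ (l + 1) := by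
  induction l with
  | zero => norm_num [Finset.sum_range_succ]
  | succ l ih =>
    rw [Finset.sum_range_succ', ]
    have : ∑ k ∈ Finset.range (l + 1 + 1), (5.4 : ℝ) ^ (k + 1) =
        5.4 * ∑ k ∈ Finset.range (l + 1 + 1), (5.4 : ℝ) ^ k := by
      rw [Finset.mul_sum]; exact Finset.sum_congr rfl fun i _ => by ring
    rw [this, pow_succ (10:ℝ) (l + 1)]
    have : (1:ℝ) ≤ 10 ^ (l + 1) := one_le_pow₀ (by norm_num)
    norm_num at *
    linarith

lemma coeff_bound (q : ℝ[X]) (l : ℕ) (hl : 0 < l) (hd : q.natDegree ≤ l)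
    (hq : ∀ j : ℕ, |q.eval (j : ℝ)| ≤ 1.01 * 1.7 ^ j) (n : ℕ) :
    |q.coeff n| ≤ 10 ^ l / (Nat.factorial n : ℝ) := by
  have hp : (0:ℝ) < Nat.factorial n := by positivity
  rw [le_div_iff₀ hp, mul_comm]
  have hb := diff_bound q 1.01 1.7 hq
  rw [newton q l hd, finsetSum_coeff]
  generalize (fun k => (fwdDiff (1:ℝ))^[k] q.eval 0) = D at *
  calc (Nat.factorial n : ℝ) * |∑ k ∈ Finset.range (l + 1),
        (C ((fwdDiff (1:ℝ))^[k] q.eval 0) * B k).coeff n|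
      ≤ Nat.factorial n * ∑ k ∈ Finset.range (l + 1),
        |(C ((fwdDiff (1:ℝ))^[k] q.eval 0) * B k).coeff n| := by
        gcongr; exact Finset.abs_sum_le_sum_abs _ _
    _ ≤ ∑ k ∈ Finset.range (l + 1), 1.01 * (5.4:ℝ) ^ k := by
        rw [Finset.mul_sum]
        apply Finset.sum_le_sum
        intro k _
        rw [coeff_C_mul, abs_mul]
        have h1 := hb k
        have h2 := B_coeff k n
        have h3 : (k.choose n : ℝ) ≤ 2 ^ k := by exact_mod_cast Nat.choose_le_two_pow k n
        calc _ = |(fwdDiff (1:ℝ))^[k] q.eval 0| * (Nat.factorial n * |(B k).coeff n|) := by ring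
          _ ≤ (1.01 * (1.7 + 1) ^ k) * 2 ^ k := by
            gcongr; exact h2.trans h3
          _ = 1.01 * ((1.7 + 1) * 2) ^ k := by rw [mul_pow]; ring
          _ = _ := by norm_num
    _ ≤ 10 ^ l := by
        rw [← Finset.mul_sum]
        obtain ⟨l', rfl⟩ : ∃ l', l = l' + 1 := ⟨l - 1, by omega⟩
        exact geom_bound l'

lemma sPoly_eval (m : ℕ) (x : ℝ) : (sPoly m).eval x = S m x := by
  simp only [sPoly, S, eval_finsetSum, eval_mul, eval_C, eval_pow, eval_X]
  exact Finset.sum_congr rfl fun i _ => by ring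

lemma sPoly_natDegree (m : ℕ) : (sPoly m).natDegree ≤ m := by
  unfold sPoly
  apply natDegree_sum_le_of_forall_le
  intro i hi
  refine (natDegree_C_mul_X_pow_le _ _).trans ?_
  simp at hi; omega

lemma val_bound (m : ℕ) (c : ℝ) (hc1 : -0.01 ≤ c) (hc2 : c ≤ 0.01) (j : ℕ) (a : ℝ)
    (ha : a ^ 2 ≤ S (m + 1) j + c * S m j) : |a| ≤ 1.01 * 1.7 ^ j := by
  have hs : ∀ m, S m j ≤ Real.exp j := fun m => Real.sum_le_exp_of_nonneg (by positivity) _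
  have hs0 : 0 ≤ S m j := Finset.sum_nonneg fun i _ => by positivity
  have h1 : a ^ 2 ≤ 1.01 * Real.exp j := by nlinarith [hs m, hs (m + 1)]
  have h2 : Real.exp j ≤ (1.7 ^ j) ^ 2 := by
    have : Real.exp j = Real.exp 1 ^ j := by rw [← Real.exp_nat_mul]; simp
    rw [this, ← pow_mul, mul_comm, pow_mul]
    have := Real.exp_one_lt_d9
    gcongr; norm_num; linarith
  apply abs_le_of_sq_le_sq _ (by positivity)
  rw [mul_pow]
  nlinarith [sq_nonneg ((1.7:ℝ) ^ j)]

end TruncSOS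

/-- **Bounded coefficient polynomials** (Corollary B.3). For a positive integer `ℓ` and
a real `c` with `-0.01 ≤ c ≤ 0.01`, the polynomial `s_{2ℓ} + c·s_{2ℓ-1}` is a
`(2^ℓ, ℓ, 10^ℓ)`-bounded sum-of-squares polynomial. -/
theorem even_plus_odd_truncation_sos (ℓ : ℕ) (hℓ : 0 < ℓ) (c : ℝ)
    (hc1 : -0.01 ≤ c) (hc2 : c ≤ 0.01) :
    UniSoSBounded (2 ^ ℓ) ℓ ((10 : ℝ) ^ ℓ)
      (sPoly (2 * ℓ) + Polynomial.C c * sPoly (2 * ℓ - 1)) := by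
  obtain ⟨m, hm⟩ : ∃ m, 2 * ℓ = m + 1 := ⟨2 * ℓ - 1, by omega⟩
  have hodd : Odd m := ⟨ℓ - 1, by omega⟩
  have hm' : 2 * ℓ - 1 = m := by omega
  rw [hm', hm]
  have hev : ∀ x, (sPoly (m + 1) + Polynomial.C c * sPoly m).eval x =
      TruncSOS.S (m + 1) x + c * TruncSOS.S m x := by
    intro x; simp [TruncSOS.sPoly_eval]
  have hdeg : (sPoly (m + 1) + Polynomial.C c * sPoly m).natDegree ≤ 2 * ℓ := by
    refine (Polynomial.natDegree_add_le _ _).trans (max_le ?_ ?_)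
    · rw [hm]; exact TruncSOS.sPoly_natDegree _
    · refine (Polynomial.natDegree_C_mul_le _ _).trans ((TruncSOS.sPoly_natDegree _).trans (by omega))
  obtain ⟨p, q, hpq, hp, hq⟩ := TruncSOS.sos_two _ _ le_rfl (fun x => by
    rw [hev x]; exact TruncSOS.F_pos m hodd c hc1 hc2 x)
  have hval : ∀ x, p.eval x ^ 2 + q.eval x ^ 2 = TruncSOS.S (m + 1) x + c * TruncSOS.S m x := by
    intro x; rw [← hev x, hpq]; simp
  have bp : UniBounded ℓ (10 ^ ℓ) p := ⟨by omega, fun n _ =>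
    TruncSOS.coeff_bound p ℓ hℓ (by omega) (fun j => TruncSOS.val_bound m c hc1 hc2 j _ (by
      rw [← hval]; nlinarith [sq_nonneg (q.eval (j : ℝ))])) n⟩
  have bq : UniBounded ℓ (10 ^ ℓ) q := ⟨by omega, fun n _ =>
    TruncSOS.coeff_bound q ℓ hℓ (by omega) (fun j => TruncSOS.val_bound m c hc1 hc2 j _ (by
      rw [← hval]; nlinarith [sq_nonneg (p.eval (j : ℝ))])) n⟩
  have b0 : UniBounded ℓ (10 ^ ℓ) 0 := ⟨by simp, fun n _ => by simp; positivity⟩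
  obtain ⟨N, hN⟩ : ∃ N, 2 ^ ℓ = N + 2 := by
    have : 2 ^ 1 ≤ 2 ^ ℓ := Nat.pow_le_pow_right (by norm_num) hℓ
    exact ⟨2 ^ ℓ - 2, by omega⟩
  rw [hN, hpq]
  refine ⟨Fin.cons p (Fin.cons q fun _ => 0), ?_, ?_⟩
  · intro i
    refine Fin.cases ?_ (fun i => ?_) i
    · simpa using bp
    · refine Fin.cases ?_ (fun i => ?_) i
      · simpa using bq
      · simpa using b0
  · rw [Fin.sum_univ_succ, Fin.sum_univ_succ]
    simp
end

section
/- For all positive integers k, ℓ, the polynomial p_{k,ℓ} is ((2^{k+1} − 1)ℓ, 1)-bounded: it has degree (2^{k+1} − 1)ℓ and, for every natural number d, the coefficient of x^d in p_{k,ℓ} has magnitude at most 1/d!. Likewise, q_{k,ℓ} is ((2^{k+1} − 1)ℓ + 1, 1)-bounded. -/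
open scoped BigOperators

/-- `pPoly k ℓ = ∏_{j=1}^{k} s_{2^j ℓ}(x/k)`, as a real polynomial in `x`. -/
noncomputable def pPoly (k ℓ : ℕ) : Polynomial ℝ :=
  ∏ j ∈ Finset.Icc 1 k, (sPoly (2 ^ j * ℓ)).comp (Polynomial.C (1 / (k : ℝ)) * Polynomial.X)

/-- `qPoly k ℓ = 1 + ∫_0^x pPoly k ℓ (y) dy`, as a real polynomial in `x` (the shifted
antiderivative of `pPoly k ℓ` with constant term `1`). -/
noncomputable def qPoly (k ℓ : ℕ) : Polynomial ℝ :=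
  1 + ∑ n ∈ Finset.range ((pPoly k ℓ).natDegree + 1),
    Polynomial.C ((pPoly k ℓ).coeff n / ((n : ℝ) + 1)) * Polynomial.X ^ (n + 1)

theorem sPoly_coeff (m n : ℕ) :
    (sPoly m).coeff n = if n < m + 1 then 1 / (Nat.factorial n : ℝ) else 0 := by
  unfold sPoly
  simp [Polynomial.finsetSum_coeff, Polynomial.coeff_X_pow]

theorem sPoly_natDegree_le (m : ℕ) : (sPoly m).natDegree ≤ m := by
  rw [Polynomial.natDegree_le_iff_coeff_eq_zero]
  intro n hn
  rw [sPoly_coeff, if_neg (by omega)]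

theorem factor_coeff (m : ℕ) (c : ℝ) (hc : 0 ≤ c) (n : ℕ) :
    0 ≤ ((sPoly m).comp (Polynomial.C c * Polynomial.X)).coeff n ∧
    ((sPoly m).comp (Polynomial.C c * Polynomial.X)).coeff n ≤ c ^ n / (Nat.factorial n : ℝ) := by
  rw [Polynomial.comp_C_mul_X_coeff, sPoly_coeff]
  split_ifs
  · refine ⟨by positivity, le_of_eq (by ring)⟩
  · simp only [zero_mul]
    exact ⟨le_refl _, by positivity⟩

theorem exp_conv (a b : ℝ) (d : ℕ) :
    ∑ x ∈ Finset.HasAntidiagonal.antidiagonal d, (a ^ x.1 / (Nat.factorial x.1 : ℝ)) *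
      (b ^ x.2 / (Nat.factorial x.2 : ℝ)) = (a + b) ^ d / (Nat.factorial d : ℝ) := by
  rw [(Commute.all a b).add_pow', Finset.sum_div]
  refine Finset.sum_congr rfl fun x hx => ?_
  rw [Finset.HasAntidiagonal.mem_antidiagonal] at hx
  subst hx
  have h : ((x.1 + x.2).choose x.1 : ℝ) * (Nat.factorial x.1) * (Nat.factorial x.2)
      = (Nat.factorial (x.1 + x.2) : ℝ) := by
    rw [Nat.choose_symm_add]
    exact_mod_cast Nat.add_choose_mul_factorial_mul_factorial x.1 x.2
  have h1 : (Nat.factorial x.1 : ℝ) ≠ 0 := by positivity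
  have h2 : (Nat.factorial x.2 : ℝ) ≠ 0 := by positivity
  have h3 : (Nat.factorial (x.1 + x.2) : ℝ) ≠ 0 := by positivity
  rw [nsmul_eq_mul, div_mul_div_comm, div_eq_div_iff (mul_ne_zero h1 h2) h3, ← h]
  ring

theorem prod_coeff (s : Finset ℕ) (f : ℕ → ℕ) (c : ℝ) (hc : 0 ≤ c) : ∀ d : ℕ,
    0 ≤ (∏ j ∈ s, (sPoly (f j)).comp (Polynomial.C c * Polynomial.X)).coeff d ∧
    (∏ j ∈ s, (sPoly (f j)).comp (Polynomial.C c * Polynomial.X)).coeff d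
      ≤ ((s.card : ℝ) * c) ^ d / (Nat.factorial d : ℝ) := by
  induction s using Finset.induction_on with
  | empty =>
    intro d
    rcases d with _ | d <;> simp [Polynomial.coeff_one]
  | insert a s ha ih =>
    intro d
    rw [Finset.prod_insert ha, Polynomial.coeff_mul, Finset.card_insert_of_notMem ha]
    constructor
    · exact Finset.sum_nonneg fun x _ => mul_nonneg (factor_coeff _ c hc _).1 (ih _).1
    · have : (((s.card + 1 : ℕ) : ℝ) * c) = c + s.card * c := by push_cast; ring
      rw [this, ← exp_conv]
      refine Finset.sum_le_sum fun x _ => ?_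
      exact mul_le_mul (factor_coeff _ c hc _).2 (ih _).2 (ih _).1 (by positivity)

theorem sum_two_pow (k ℓ : ℕ) :
    ∑ j ∈ Finset.Icc 1 k, 2 ^ j * ℓ ≤ (2 ^ (k + 1) - 1) * ℓ := by
  rw [← Finset.sum_mul]
  refine Nat.mul_le_mul_right _ ?_
  induction k with
  | zero => simp
  | succ n ih =>
    rw [Finset.sum_Icc_succ_top (by omega)]
    have : 2 ^ (n + 1 + 1) = 2 * 2 ^ (n + 1) := by ring
    have : 0 < 2 ^ (n + 1) := by positivity
    omega

theorem pPoly_natDegree (k ℓ : ℕ) : (pPoly k ℓ).natDegree ≤ (2 ^ (k + 1) - 1) * ℓ := by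
  refine le_trans ?_ (sum_two_pow k ℓ)
  unfold pPoly
  refine le_trans (Polynomial.natDegree_prod_le _ _) (Finset.sum_le_sum fun j _ => ?_)
  refine le_trans Polynomial.natDegree_comp_le ?_
  calc _ ≤ (2 ^ j * ℓ) * 1 := Nat.mul_le_mul (sPoly_natDegree_le _)
        ((Polynomial.natDegree_C_mul_le _ _).trans Polynomial.natDegree_X_le)
    _ = _ := by ring

theorem pPoly_coeff (k ℓ : ℕ) (hk : 0 < k) (d : ℕ) :
    |(pPoly k ℓ).coeff d| ≤ 1 / (Nat.factorial d : ℝ) := by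
  have h := prod_coeff (Finset.Icc 1 k) (fun j => 2 ^ j * ℓ) (1 / (k : ℝ)) (by positivity) d
  have hk' : (k : ℝ) ≠ 0 := by positivity
  rw [Nat.card_Icc, Nat.add_sub_cancel, mul_one_div_cancel hk', one_pow] at h
  unfold pPoly
  rw [abs_of_nonneg h.1]
  exact h.2

theorem qPoly_natDegree (k ℓ : ℕ) :
    (qPoly k ℓ).natDegree ≤ (2 ^ (k + 1) - 1) * ℓ + 1 := by
  unfold qPoly
  refine Polynomial.natDegree_add_le_of_degree_le (by simp) ?_
  refine Polynomial.natDegree_sum_le_of_forall_le _ _ fun n hn => ?_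
  refine le_trans (Polynomial.natDegree_C_mul_X_pow_le _ _) ?_
  have := pPoly_natDegree k ℓ
  rw [Finset.mem_range] at hn
  omega

theorem qPoly_coeff (k ℓ : ℕ) (hk : 0 < k) (d : ℕ) :
    |(qPoly k ℓ).coeff d| ≤ 1 / (Nat.factorial d : ℝ) := by
  unfold qPoly
  rw [Polynomial.coeff_add, Polynomial.finsetSum_coeff]
  simp only [Polynomial.coeff_C_mul, Polynomial.coeff_X_pow]
  rcases d with _ | d
  · simp
  · have h0 : (1 : Polynomial ℝ).coeff (d + 1) = 0 := by simp [Polynomial.coeff_one]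
    simp only [h0, zero_add, add_left_inj, mul_ite, mul_one, mul_zero, Finset.sum_ite_eq]
    split_ifs
    · rw [abs_div, abs_of_pos (by positivity : (0 : ℝ) < (d : ℝ) + 1), Nat.factorial_succ]
      push_cast
      rw [mul_comm, ← div_div]
      exact div_le_div_of_nonneg_right (pPoly_coeff k ℓ hk d) (by positivity)
    · rw [abs_zero]
      positivity

/-- **Claim 4.9.** For positive integers `k, ℓ`, the polynomial `p_{k,ℓ}` is
`((2^{k+1}-1)ℓ, 1)`-bounded: it has degree at most `(2^{k+1}-1)ℓ` and for every `d` the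
coefficient of `x^d` has magnitude at most `1/d!`. Likewise, `q_{k,ℓ}` is
`((2^{k+1}-1)ℓ + 1, 1)`-bounded. -/
theorem pPoly_qPoly_bounded (k ℓ : ℕ) (hk : 0 < k) (hℓ : 0 < ℓ) :
    ((pPoly k ℓ).natDegree ≤ (2 ^ (k + 1) - 1) * ℓ ∧
      ∀ d : ℕ, |(pPoly k ℓ).coeff d| ≤ 1 / (Nat.factorial d : ℝ)) ∧
    ((qPoly k ℓ).natDegree ≤ (2 ^ (k + 1) - 1) * ℓ + 1 ∧
      ∀ d : ℕ, |(qPoly k ℓ).coeff d| ≤ 1 / (Nat.factorial d : ℝ)) := by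
  exact ⟨⟨pPoly_natDegree k ℓ, pPoly_coeff k ℓ hk⟩, qPoly_natDegree k ℓ, qPoly_coeff k ℓ hk⟩
end

section
/- For all positive integers k, ℓ and all real x, both p_{k,ℓ}(x) − 0.004·p'_{k,ℓ}(x) ≥ 0 and p_{k,ℓ}(x) + 0.004·p'_{k,ℓ}(x) ≥ 0, where p'_{k,ℓ} denotes the derivative of p_{k,ℓ}. -/
open scoped BigOperators

lemma taylorExp_hasDerivAt (m : ℕ) (y : ℝ) :
    HasDerivAt (taylorExp m) (taylorExp m y - y ^ m / (Nat.factorial m : ℝ)) y := by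
  induction m with
  | zero =>
    have h : taylorExp 0 = fun _ => (1 : ℝ) := by
      funext z; simp [taylorExp]
    rw [h]
    simpa using hasDerivAt_const y (1 : ℝ)
  | succ n ih =>
    have h : taylorExp (n + 1) =
        fun z => taylorExp n z + z ^ (n + 1) / (Nat.factorial (n + 1) : ℝ) := by
      funext z; simp only [taylorExp]; rw [Finset.sum_range_succ]
    rw [h]
    have h2 := ih.add ((hasDerivAt_pow (n + 1) y).div_const (Nat.factorial (n + 1) : ℝ))
    refine h2.congr_deriv ?_
    have hn : (Nat.factorial n : ℝ) ≠ 0 := by positivity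
    have hn1 : (n : ℝ) + 1 ≠ 0 := by positivity
    simp only [Nat.factorial_succ, Nat.cast_mul, Nat.cast_add, Nat.cast_one, Nat.add_sub_cancel]
    field_simp
    ring

/-- The function `e^t s_m(-t)` has derivative `e^t t^m / m!` for even `m`. -/
lemma aux_hasDerivAt (m : ℕ) (hm : Even m) (t : ℝ) :
    HasDerivAt (fun t => Real.exp t * taylorExp m (-t))
      (Real.exp t * (t ^ m / (Nat.factorial m : ℝ))) t := by
  have h1 := (taylorExp_hasDerivAt m (-t)).comp t (hasDerivAt_neg t)
  have h2 := (Real.hasDerivAt_exp t).mul h1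
  refine h2.congr_deriv ?_
  simp only [Function.comp, hm.neg_pow]
  ring

lemma aux_one_le (m : ℕ) (hm : Even m) (t : ℝ) (ht : 0 ≤ t) :
    1 ≤ Real.exp t * taylorExp m (-t) := by
  have hmono : Monotone (fun t => Real.exp t * taylorExp m (-t)) := by
    apply monotone_of_deriv_nonneg
    · exact fun t => (aux_hasDerivAt m hm t).differentiableAt
    · intro t
      rw [(aux_hasDerivAt m hm t).deriv]
      have := hm.pow_nonneg t
      positivity
  have h0 : taylorExp m 0 = 1 := by
    simp [taylorExp, Finset.sum_range_succ']
  have := hmono ht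
  simpa [h0] using this

lemma aux_small (m : ℕ) (t : ℝ) (ht : 0 ≤ t) (h : t ≤ m / 250) :
    Real.exp t * (t ^ m / (Nat.factorial m : ℝ)) ≤ 1 := by
  have hm0 : (0 : ℝ) ≤ m := by positivity
  have h1 : (m : ℝ) ^ m / (Nat.factorial m : ℝ) ≤ Real.exp m :=
    Real.pow_div_factorial_le_exp _ hm0 m
  have h2 : t ^ m / (Nat.factorial m : ℝ) ≤ Real.exp m / 250 ^ m := by
    calc t ^ m / (Nat.factorial m : ℝ) ≤ ((m : ℝ) / 250) ^ m / (Nat.factorial m : ℝ) := by gcongr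
      _ = ((m : ℝ) ^ m / (Nat.factorial m : ℝ)) / 250 ^ m := by rw [div_pow]; ring
      _ ≤ _ := by gcongr
  have h3 : Real.exp t ≤ Real.exp m := by
    apply Real.exp_le_exp.2; linarith
  have h4 : Real.exp m = Real.exp 1 ^ m := by rw [← Real.exp_nat_mul]; simp
  calc Real.exp t * (t ^ m / (Nat.factorial m : ℝ))
      ≤ Real.exp m * (Real.exp m / 250 ^ m) := by gcongr
    _ = (Real.exp 1 * Real.exp 1 / 250) ^ m := by rw [h4, div_pow, mul_pow]; ring
    _ ≤ 1 := by
      apply pow_le_one₀ (by positivity)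
      have := Real.exp_one_lt_d9
      have := Real.exp_pos 1
      nlinarith

lemma aux_bound (m : ℕ) (hm : Even m) (hm0 : 0 < m) (t : ℝ) (ht : 0 ≤ t) :
    Real.exp t * (t ^ m / (Nat.factorial m : ℝ)) ≤ 251 * (Real.exp t * taylorExp m (-t)) := by
  by_cases h : t ≤ m / 250
  · have := aux_small m t ht h
    have := aux_one_le m hm t ht
    linarith
  · push Not at h
    set T : ℝ := m / 250 with hT
    have hT0 : 0 ≤ T := by positivity
    have hd : ∀ u : ℝ, HasDerivAt (fun u => 251 * (Real.exp u * taylorExp m (-u))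
        - Real.exp u * (u ^ m / (Nat.factorial m : ℝ)))
        (251 * (Real.exp u * (u ^ m / (Nat.factorial m : ℝ)))
        - (Real.exp u * (u ^ m / (Nat.factorial m : ℝ))
          + Real.exp u * (m * u ^ (m - 1) / (Nat.factorial m : ℝ)))) u := by
      intro u
      exact ((aux_hasDerivAt m hm u).const_mul 251).sub
        ((Real.hasDerivAt_exp u).mul ((hasDerivAt_pow m u).div_const _))
    have hmono : MonotoneOn (fun u => 251 * (Real.exp u * taylorExp m (-u))
        - Real.exp u * (u ^ m / (Nat.factorial m : ℝ))) (Set.Ici T) := by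
      apply monotoneOn_of_deriv_nonneg (convex_Ici T)
      · exact fun u _ => (hd u).continuousAt.continuousWithinAt
      · exact fun u _ => (hd u).differentiableAt.differentiableWithinAt
      · intro u hu
        rw [interior_Ici, Set.mem_Ioi] at hu
        rw [(hd u).deriv]
        have hu0 : 0 ≤ u := hT0.trans hu.le
        have e : u ^ m = u * u ^ (m - 1) := by
          rw [← pow_succ', Nat.sub_add_cancel hm0]
        rw [e]
        have key : 0 ≤ Real.exp u * u ^ (m - 1) / (Nat.factorial m : ℝ) * (250 * u - m) := by
          apply mul_nonneg (by positivity)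
          rw [hT] at hu; linarith
        refine key.trans_eq ?_
        ring
    have h1 := hmono (Set.mem_Ici.2 le_rfl) (Set.mem_Ici.2 h.le) h.le
    have h2 := aux_small m T hT0 le_rfl
    have h3 := aux_one_le m hm T hT0
    simp only at h1
    linarith

lemma taylorExp_main (m : ℕ) (hm : Even m) (hm0 : 0 < m) (y : ℝ) :
    0 < taylorExp m y ∧ y ^ m / (Nat.factorial m : ℝ) ≤ 251 * taylorExp m y := by
  rcases le_total 0 y with hy | hy
  · have h0 : taylorExp m y =
        ∑ k ∈ Finset.range m, y ^ k / (Nat.factorial k : ℝ) + y ^ m / (Nat.factorial m : ℝ) := by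
      simp only [taylorExp]; rw [Finset.sum_range_succ]
    have h1 : (0 : ℝ) < ∑ k ∈ Finset.range m, y ^ k / (Nat.factorial k : ℝ) := by
      apply Finset.sum_pos' (fun k _ => by positivity)
      exact ⟨0, Finset.mem_range.2 hm0, by simp⟩
    have h2 : 0 ≤ y ^ m / (Nat.factorial m : ℝ) := by positivity
    constructor <;> linarith
  · have ht : 0 ≤ -y := by linarith
    have h1 := aux_one_le m hm (-y) ht
    have h2 := aux_bound m hm hm0 (-y) ht
    rw [neg_neg] at h1 h2
    rw [hm.neg_pow] at h2
    have hp := Real.exp_pos (-y)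
    constructor
    · exact pos_of_mul_pos_right (by linarith) hp.le
    · refine le_of_mul_le_mul_left ?_ hp
      linarith

/-- For all positive integers `k, ℓ` and all real `x`, both
`p_{k,ℓ}(x) - 0.004 p'_{k,ℓ}(x) ≥ 0` and `p_{k,ℓ}(x) + 0.004 p'_{k,ℓ}(x) ≥ 0`. -/
theorem p_plus_minus_deriv_nonneg (k ℓ : ℕ) (hk : 0 < k) (hℓ : 0 < ℓ) (x : ℝ) :
    0 ≤ pkl k ℓ x - 0.004 * deriv (pkl k ℓ) x ∧
    0 ≤ pkl k ℓ x + 0.004 * deriv (pkl k ℓ) x := by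
  have hkpos : (0 : ℝ) < k := by exact_mod_cast hk
  have hev : ∀ j ∈ Finset.Icc 1 k, Even (2 ^ j * ℓ) ∧ 0 < 2 ^ j * ℓ := by
    intro j hj
    have hj1 := (Finset.mem_Icc.1 hj).1
    refine ⟨Even.mul_right ?_ _, by positivity⟩
    exact (even_two).pow_of_ne_zero (by omega)
  have hf : ∀ j ∈ Finset.Icc 1 k,
      HasDerivAt (fun x : ℝ => taylorExp (2 ^ j * ℓ) (x / (k : ℝ)))
        ((taylorExp (2 ^ j * ℓ) (x / k)
          - (x / k) ^ (2 ^ j * ℓ) / (Nat.factorial (2 ^ j * ℓ) : ℝ)) * (1 / k)) x := by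
    intro j _
    exact (taylorExp_hasDerivAt (2 ^ j * ℓ) (x / k)).comp x ((hasDerivAt_id x).div_const (k : ℝ))
  have hp : HasDerivAt (pkl k ℓ) _ x := HasDerivAt.fun_finsetProd hf
  have habs : |deriv (pkl k ℓ) x| ≤ 250 * pkl k ℓ x := by
    rw [hp.deriv]
    refine (Finset.abs_sum_le_sum_abs _ _).trans ?_
    have hterm : ∀ j ∈ Finset.Icc 1 k,
        |(∏ i ∈ (Finset.Icc 1 k).erase j, taylorExp (2 ^ i * ℓ) (x / (k : ℝ))) •
          ((taylorExp (2 ^ j * ℓ) (x / k)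
          - (x / k) ^ (2 ^ j * ℓ) / (Nat.factorial (2 ^ j * ℓ) : ℝ)) * (1 / k))|
        ≤ 250 * pkl k ℓ x / k := by
      intro j hj
      obtain ⟨he, hpos⟩ := hev j hj
      obtain ⟨h1, h2⟩ := taylorExp_main _ he hpos (x / k)
      have h3 : 0 ≤ (x / k) ^ (2 ^ j * ℓ) / (Nat.factorial (2 ^ j * ℓ) : ℝ) :=
        div_nonneg (he.pow_nonneg _) (by positivity)
      have hP : 0 ≤ ∏ i ∈ (Finset.Icc 1 k).erase j, taylorExp (2 ^ i * ℓ) (x / (k : ℝ)) := by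
        apply Finset.prod_nonneg
        intro i hi
        obtain ⟨he, hpos⟩ := hev i (Finset.mem_of_mem_erase hi)
        exact (taylorExp_main _ he hpos (x / k)).1.le
      have hprod : pkl k ℓ x = (∏ i ∈ (Finset.Icc 1 k).erase j,
          taylorExp (2 ^ i * ℓ) (x / (k : ℝ))) * taylorExp (2 ^ j * ℓ) (x / k) := by
        rw [pkl, Finset.prod_erase_mul _ _ hj]
      have h4 : |taylorExp (2 ^ j * ℓ) (x / k)
          - (x / k) ^ (2 ^ j * ℓ) / (Nat.factorial (2 ^ j * ℓ) : ℝ)|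
          ≤ 250 * taylorExp (2 ^ j * ℓ) (x / k) := by
        rw [abs_le]; constructor <;> linarith
      rw [smul_eq_mul, abs_mul, abs_mul, abs_of_nonneg hP,
        abs_of_nonneg (by positivity : (0 : ℝ) ≤ 1 / k), hprod]
      calc _ ≤ (∏ i ∈ (Finset.Icc 1 k).erase j, taylorExp (2 ^ i * ℓ) (x / (k : ℝ))) *
            (250 * taylorExp (2 ^ j * ℓ) (x / k) * (1 / k)) := by gcongr
        _ = _ := by ring
    refine (Finset.sum_le_sum hterm).trans_eq ?_
    rw [Finset.sum_const, Nat.card_Icc, nsmul_eq_mul, Nat.add_sub_cancel]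
    field_simp
  obtain ⟨h1, h2⟩ := abs_le.1 habs
  constructor <;> norm_num <;> linarith
end

section
/- Let p be a real polynomial in m variables of degree at most 2 such that p(y_1, …, y_m) ≥ 0 for all (y_1, …, y_m) ∈ ℝ^m. Then there exist polynomials l_1, …, l_{m+1} in m variables, each of degree at most 1, such that p = l_1^2 + ⋯ + l_{m+1}^2. -/
open scoped BigOperators

/-- The homogenizing list `1, X_1, …, X_m`. -/
noncomputable def linL (m : ℕ) : Fin (m + 1) → MvPolynomial (Fin m) ℝ :=
  Fin.cons 1 MvPolynomial.X

lemma linL_deg (m : ℕ) (i : Fin (m + 1)) : (linL m i).totalDegree ≤ 1 := by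
  refine Fin.cases ?_ (fun j => ?_) i
  · simp [linL]
  · simp [linL, MvPolynomial.totalDegree_X]

lemma linL_eval (m : ℕ) (y : Fin m → ℝ) (i : Fin (m + 1)) :
    MvPolynomial.eval y (linL m i) = (Fin.cons 1 y : Fin (m + 1) → ℝ) i := by
  refine Fin.cases ?_ (fun j => ?_) i <;> simp [linL]

lemma monomial_eq_linL (m : ℕ) (s : Fin m →₀ ℕ) (hs : s.sum (fun _ e => e) ≤ 2) :
    ∃ i j, MvPolynomial.monomial s (1 : ℝ) = linL m i * linL m j := by
  have h1 : MvPolynomial.monomial s (1 : ℝ)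
      = ((Finsupp.toMultiset s).map MvPolynomial.X).prod := by
    rw [MvPolynomial.monomial_eq, Finsupp.toMultiset_map, Finsupp.prod_toMultiset,
      Finsupp.prod_mapDomain_index] <;> simp [pow_add]
  have h2 : (Finsupp.toMultiset s).card ≤ 2 := by
    rw [Finsupp.card_toMultiset]; exact hs
  rw [h1]
  generalize Finsupp.toMultiset s = t at h2
  have h3 : t.card = 0 ∨ t.card = 1 ∨ t.card = 2 := by omega
  rcases h3 with h | h | h
  · rw [Multiset.card_eq_zero] at h
    subst h
    exact ⟨0, 0, by simp [linL]⟩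
  · rw [Multiset.card_eq_one] at h
    obtain ⟨a, rfl⟩ := h
    exact ⟨0, a.succ, by simp [linL]⟩
  · rw [Multiset.card_eq_two] at h
    obtain ⟨a, b, rfl⟩ := h
    exact ⟨a.succ, b.succ, by simp [linL]⟩

lemma exists_gram (m : ℕ) (p : MvPolynomial (Fin m) ℝ) (hdeg : p.totalDegree ≤ 2) :
    ∃ N : Matrix (Fin (m + 1)) (Fin (m + 1)) ℝ,
      p = ∑ i, ∑ j, MvPolynomial.C (N i j) * (linL m i * linL m j) := by
  have key : ∀ s : Fin m →₀ ℕ, ∃ N : Matrix (Fin (m + 1)) (Fin (m + 1)) ℝ, s ∈ p.support →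
      MvPolynomial.monomial s (p.coeff s)
        = ∑ i, ∑ j, MvPolynomial.C (N i j) * (linL m i * linL m j) := by
    intro s
    by_cases hs : s ∈ p.support
    · obtain ⟨a, b, hab⟩ := monomial_eq_linL m s ((MvPolynomial.le_totalDegree hs).trans hdeg)
      refine ⟨fun i j => if i = a then if j = b then p.coeff s else 0 else 0, fun _ => ?_⟩
      rw [Finset.sum_eq_single a, Finset.sum_eq_single b]
      · simp only [if_true]
        rw [← hab, MvPolynomial.C_mul_monomial, mul_one]
      · intro j _ hj; simp [hj]
      · simp
      · intro j _ hj; simp [hj]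
      · simp
    · exact ⟨0, fun h => absurd h hs⟩
  choose N hN using key
  refine ⟨fun i j => ∑ s ∈ p.support, N s i j, ?_⟩
  conv_lhs => rw [p.as_sum]
  rw [Finset.sum_congr rfl hN, Finset.sum_comm]
  refine Finset.sum_congr rfl fun i _ => ?_
  rw [Finset.sum_comm]
  refine Finset.sum_congr rfl fun j _ => ?_
  rw [map_sum, Finset.sum_mul]

lemma exists_gram_symm (m : ℕ) (p : MvPolynomial (Fin m) ℝ) (hdeg : p.totalDegree ≤ 2) :
    ∃ N : Matrix (Fin (m + 1)) (Fin (m + 1)) ℝ, (∀ i j, N i j = N j i) ∧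
      p = ∑ i, ∑ j, MvPolynomial.C (N i j) * (linL m i * linL m j) := by
  obtain ⟨N, hN⟩ := exists_gram m p hdeg
  refine ⟨fun i j => 1 / 2 * N i j + 1 / 2 * N j i, fun i j => by ring, ?_⟩
  have h2 : p = ∑ i, ∑ j, MvPolynomial.C (N j i) * (linL m i * linL m j) := by
    rw [Finset.sum_comm]
    simpa only [mul_comm (linL m _) (linL m _)] using hN
  have h3 : p = MvPolynomial.C (1 / 2 : ℝ) * p + MvPolynomial.C (1 / 2 : ℝ) * p := by
    rw [← add_mul, ← map_add]; norm_num
  rw [h3]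
  conv_lhs => 
    congr
    · rw [hN]
    · rw [h2]
  simp only [map_add, map_mul, add_mul, Finset.sum_add_distrib, Finset.mul_sum, mul_assoc]

lemma gram_psd (m : ℕ) (p : MvPolynomial (Fin m) ℝ)
    (hpos : ∀ y : Fin m → ℝ, 0 ≤ MvPolynomial.eval y p)
    (N : Matrix (Fin (m + 1)) (Fin (m + 1)) ℝ)
    (hp : p = ∑ i, ∑ j, MvPolynomial.C (N i j) * (linL m i * linL m j))
    (v : Fin (m + 1) → ℝ) : 0 ≤ ∑ i, ∑ j, N i j * (v i * v j) := by
  have h1 : ∀ v : Fin (m + 1) → ℝ, v 0 ≠ 0 → 0 ≤ ∑ i, ∑ j, N i j * (v i * v j) := by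
    intro v hv
    have h := hpos (fun i => v i.succ / v 0)
    rw [hp] at h
    simp only [map_sum, map_mul, MvPolynomial.eval_C, linL_eval] at h
    have hw : ∀ i, v i = v 0 * (Fin.cons 1 (fun i => v i.succ / v 0) : Fin (m + 1) → ℝ) i := by
      intro i
      refine Fin.cases ?_ (fun j => ?_) i
      · simp
      · simp only [Fin.cons_succ]; field_simp
    have h' := mul_nonneg (sq_nonneg (v 0)) h
    refine h'.trans_eq ?_
    simp only [Finset.mul_sum]
    refine Finset.sum_congr rfl fun i _ => Finset.sum_congr rfl fun j _ => ?_
    rw [hw i, hw j]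
    ring
  have hcl : IsClosed {t : ℝ | 0 ≤ ∑ i, ∑ j, N i j *
      (Function.update v 0 t i * Function.update v 0 t j)} := by
    refine isClosed_le continuous_const ?_
    have hc : ∀ i, Continuous fun t : ℝ => Function.update v 0 t i := by
      intro i
      have hu : Continuous fun t : ℝ => Function.update v 0 t :=
        continuous_const.update 0 continuous_id
      exact (continuous_apply i).comp hu
    refine continuous_finsetSum _ fun i _ => continuous_finsetSum _ fun j _ => ?_
    exact continuous_const.mul ((hc i).mul (hc j))
  have hsub : ({0}ᶜ : Set ℝ) ⊆ {t : ℝ | 0 ≤ ∑ i, ∑ j, N i j *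
      (Function.update v 0 t i * Function.update v 0 t j)} := by
    intro t ht
    exact h1 _ (by simpa using ht)
  have := hcl.closure_subset_iff.2 hsub ((dense_compl_singleton (0 : ℝ)) (v 0))
  simpa using this

/-- **Nonnegative quadratics are sums of `m+1` squares of linear polynomials**
(Fact 2.26). If `p` is a real polynomial in `m` variables of degree at most `2` with
`p(y) ≥ 0` for all `y ∈ ℝ^m`, then `p = l₁² + ⋯ + l_{m+1}²` for polynomials `lᵢ` of
degree at most `1`. -/
theorem nonneg_quadratic_is_sos (m : ℕ) (p : MvPolynomial (Fin m) ℝ)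
    (hdeg : p.totalDegree ≤ 2)
    (hpos : ∀ y : Fin m → ℝ, 0 ≤ MvPolynomial.eval y p) :
    ∃ l : Fin (m + 1) → MvPolynomial (Fin m) ℝ,
      (∀ i, (l i).totalDegree ≤ 1) ∧ p = ∑ i, (l i) ^ 2 := by
  obtain ⟨N, hsymm, hp⟩ := exists_gram_symm m p hdeg
  have hpsd : N.PosSemidef := by
    refine Matrix.PosSemidef.of_dotProduct_mulVec_nonneg ?_ fun v => ?_
    · ext i j; simp [hsymm i j]
    · have := gram_psd m p hpos N hp v
      refine this.trans_eq ?_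
      simp only [dotProduct, Matrix.mulVec, Finset.mul_sum]
      refine Finset.sum_congr rfl fun i _ => Finset.sum_congr rfl fun j _ => ?_
      simp only [Pi.star_apply, star_trivial]
      ring
  obtain ⟨B, hB⟩ : ∃ B : Matrix (Fin (m + 1)) (Fin (m + 1)) ℝ, N = B.conjTranspose * B := by
    open scoped MatrixOrder in
    exact CStarAlgebra.nonneg_iff_eq_star_mul_self.mp hpsd.nonneg
  refine ⟨fun k => ∑ i, MvPolynomial.C (B k i) * linL m i, fun k => ?_, ?_⟩
  · refine MvPolynomial.totalDegree_finsetSum_le fun i _ => ?_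
    refine (MvPolynomial.totalDegree_mul _ _).trans ?_
    simpa using linL_deg m i
  · rw [hp]
    simp only [sq, Finset.sum_mul_sum]
    conv_rhs => rw [Finset.sum_comm]
    refine Finset.sum_congr rfl fun i _ => ?_
    conv_rhs => rw [Finset.sum_comm]
    refine Finset.sum_congr rfl fun j _ => ?_
    rw [hB, Matrix.mul_apply, map_sum, Finset.sum_mul]
    refine Finset.sum_congr rfl fun k _ => ?_
    simp only [Matrix.conjTranspose_apply, star_trivial, map_mul]
    ring
end

section
/- Let X, Y, A be n×n complex matrices and let S, S' ∈ {0,1}^ℓ be two sequences with the same number of 0's and the same number of 1's. Then there exist a natural number t ≤ ℓ^2, coefficients c_1, …, c_t ∈ {−1, 1}, and sequences S_1, T_1, …, S_t, T_t ∈ {0,1}^* with len(S_i) + len(T_i) = ℓ − 2 for each i, such that [(X,Y)_S, A] − [(X,Y)_{S'}, A] = ∑_{i=1}^{t} c_i · [(X,Y)_{S_i}, [[X,Y], [(X,Y)_{T_i}, A]]]. -/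
open scoped BigOperators Matrix

/-- The commutator `[M, N] = MN - NM`. -/
noncomputable def matComm {n : ℕ} (M N : Matrix (Fin n) (Fin n) ℂ) : Matrix (Fin n) (Fin n) ℂ :=
  M * N - N * M

/-- The bivariate nested commutator `[(X,Y)_S, A]`: for `S = (s₁, …, s_ℓ) ∈ {0,1}^ℓ`
(encoded as a list of booleans, `false` for `0` and `true` for `1`),
`[(X,Y)_S, A] = [Z₁, [Z₂, [⋯ [Z_ℓ, A] ⋯]]]` where `Zᵢ = X` if `sᵢ = 0` and `Zᵢ = Y`
otherwise. -/
noncomputable def commSeq {n : ℕ} (X Y : Matrix (Fin n) (Fin n) ℂ) :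
    List Bool → Matrix (Fin n) (Fin n) ℂ → Matrix (Fin n) (Fin n) ℂ
  | [], A => A
  | b :: S, A => matComm (if b then Y else X) (commSeq X Y S A)

/-- `D` is a signed sum of at most `k` terms of the required shape, of total length `l`. -/
def IsReorderSum {n : ℕ} (X Y A : Matrix (Fin n) (Fin n) ℂ) (l k : ℕ)
    (D : Matrix (Fin n) (Fin n) ℂ) : Prop :=
  ∃ L : List (ℂ × List Bool × List Bool), L.length ≤ k ∧
    (∀ p ∈ L, (p.1 = 1 ∨ p.1 = -1) ∧ p.2.1.length + p.2.2.length + 2 = l) ∧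
    D = (L.map fun p =>
      p.1 • commSeq X Y p.2.1 (matComm (matComm X Y) (commSeq X Y p.2.2 A))).sum

section helpers
variable {n : ℕ} {X Y A : Matrix (Fin n) (Fin n) ℂ}

theorem IsReorderSum.zero (l k : ℕ) : IsReorderSum X Y A l k 0 :=
  ⟨[], by simp, by simp, by simp⟩

theorem IsReorderSum.mono {l k k' : ℕ} {D : Matrix (Fin n) (Fin n) ℂ}
    (h : IsReorderSum X Y A l k D) (hk : k ≤ k') : IsReorderSum X Y A l k' D := by
  obtain ⟨L, h1, h2, h3⟩ := h
  exact ⟨L, h1.trans hk, h2, h3⟩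

theorem IsReorderSum.add {l k k' : ℕ} {D D' : Matrix (Fin n) (Fin n) ℂ}
    (h : IsReorderSum X Y A l k D) (h' : IsReorderSum X Y A l k' D') :
    IsReorderSum X Y A l (k + k') (D + D') := by
  obtain ⟨L, h1, h2, h3⟩ := h
  obtain ⟨L', h1', h2', h3'⟩ := h'
  refine ⟨L ++ L', by simp; omega, ?_, by simp [h3, h3']⟩
  intro p hp
  rcases List.mem_append.1 hp with hp | hp
  · exact h2 p hp
  · exact h2' p hp

theorem IsReorderSum.cons {l k : ℕ} {D : Matrix (Fin n) (Fin n) ℂ}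
    (h : IsReorderSum X Y A l k D) (b : Bool) :
    IsReorderSum X Y A (l + 1) k (matComm (if b then Y else X) D) := by
  obtain ⟨L, h1, h2, h3⟩ := h
  refine ⟨L.map fun p => (p.1, b :: p.2.1, p.2.2), by simpa using h1, ?_, ?_⟩
  · intro p hp
    obtain ⟨q, hq, rfl⟩ := List.mem_map.1 hp
    have := h2 q hq
    refine ⟨this.1, ?_⟩
    simp only [List.length_cons]
    omega
  · subst h3
    clear h1 h2
    induction L with
    | nil => simp [matComm]
    | cons p L ih =>
      simp only [List.map_cons, List.sum_cons] at ih ⊢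
      rw [← ih]
      simp only [commSeq, matComm, mul_add, add_mul, smul_sub, mul_smul_comm, smul_mul_assoc]
      abel

theorem isReorderSum_swap (b c : Bool) (V : List Bool) :
    IsReorderSum X Y A (V.length + 2) 1
      (commSeq X Y (b :: c :: V) A - commSeq X Y (c :: b :: V) A) := by
  by_cases hbc : b = c
  · subst hbc
    rw [sub_self]
    exact .zero _ _
  · refine ⟨[(if b then -1 else 1, [], V)], by simp, ?_, ?_⟩
    · cases b <;> simp
    · cases b <;> cases c <;> simp [commSeq, matComm] at hbc ⊢ <;> noncomm_ring

theorem isReorderSum_move (b : Bool) (U V : List Bool) :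
    IsReorderSum X Y A (U.length + V.length + 1) U.length
      (commSeq X Y (b :: (U ++ V)) A - commSeq X Y (U ++ b :: V) A) := by
  induction U with
  | nil => simpa using IsReorderSum.zero _ _
  | cons c U ih =>
    have h1 := isReorderSum_swap (X := X) (Y := Y) (A := A) b c (U ++ V)
    have h2 := ih.cons c
    have e : (U ++ V).length + 2 = U.length + V.length + 1 + 1 := by simp
    rw [e] at h1
    have h3 := h1.add h2
    have e2 : (c :: U).length + V.length + 1 = U.length + V.length + 1 + 1 := by
      simp only [List.length_cons]; omega
    rw [e2]
    refine IsReorderSum.mono (k := 1 + U.length) ?_ (by simp only [List.length_cons]; omega)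
    convert h3 using 1
    simp only [commSeq, List.cons_append, matComm, mul_sub, sub_mul]
    abel

theorem isReorderSum_perm (S : List Bool) : ∀ S' : List Bool, S.Perm S' →
    IsReorderSum X Y A S.length (S.length ^ 2) (commSeq X Y S A - commSeq X Y S' A) := by
  induction S with
  | nil =>
    intro S' h
    rw [List.nil_perm.1 h, sub_self]
    exact .zero _ _
  | cons b R ih =>
    intro S' h
    obtain ⟨U, V, rfl⟩ := List.append_of_mem (h.mem_iff.1 List.mem_cons_self)
    have hp : R.Perm (U ++ V) := (List.perm_cons b).1 (h.trans List.perm_middle)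
    have hl : R.length = U.length + V.length := by simpa using hp.length_eq
    have h1 := (ih _ hp).cons b
    have h2 := isReorderSum_move (X := X) (Y := Y) (A := A) b U V
    rw [← hl] at h2
    have h3 := h1.add h2
    rw [List.length_cons]
    refine IsReorderSum.mono (k := R.length ^ 2 + U.length) ?_ (by nlinarith)
    convert h3 using 1
    simp only [commSeq, matComm, mul_sub, sub_mul]
    abel

end helpers

/-- **Reordering bivariate nested commutators** (Lemma 3.5). For sequences
`S, S' ∈ {0,1}^ℓ` with the same number of `0`'s and `1`'s, the difference
`[(X,Y)_S, A] - [(X,Y)_{S'}, A]` can be written as `∑_{i=1}^t cᵢ [(X,Y)_{Sᵢ}, [[X,Y],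
[(X,Y)_{Tᵢ}, A]]]` with `t ≤ ℓ²`, `cᵢ ∈ {-1, 1}`, and `len(Sᵢ) + len(Tᵢ) = ℓ - 2`. -/
theorem reorder_bivariate_nested_commutators (n ℓ : ℕ)
    (X Y A : Matrix (Fin n) (Fin n) ℂ)
    (S S' : List Bool) (hS : S.length = ℓ) (hS' : S'.length = ℓ)
    (hcount0 : S.count false = S'.count false)
    (hcount1 : S.count true = S'.count true) :
    ∃ t : ℕ, t ≤ ℓ ^ 2 ∧
      ∃ (c : Fin t → ℂ) (Sl Tl : Fin t → List Bool),
        (∀ i, (c i = 1 ∨ c i = -1) ∧ (Sl i).length + (Tl i).length = ℓ - 2) ∧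
        commSeq X Y S A - commSeq X Y S' A =
          ∑ i, c i • commSeq X Y (Sl i) (matComm (matComm X Y) (commSeq X Y (Tl i) A)) := by
  subst hS
  have hp : S.Perm S' := by
    rw [List.perm_iff_count]
    intro b
    cases b <;> assumption
  obtain ⟨L, h1, h2, h3⟩ := isReorderSum_perm (X := X) (Y := Y) (A := A) S S' hp
  refine ⟨L.length, h1, fun i => (L.get i).1, fun i => (L.get i).2.1, fun i => (L.get i).2.2,
    ?_, ?_⟩
  · intro i
    have := h2 (L.get i) (List.get_mem L i)
    exact ⟨this.1, by dsimp only; omega⟩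
  · rw [h3, ← Fin.sum_univ_fun_getElem]
    rfl
end
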